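/- arXiv:2206.15293 — 4 statements merged into one kernel-verified Lean document; each statement's English description precedes it below -/
import Mathlib

section
/- If N is a perfect normal subgroup of a finite group G (N = N' and N > 1), θ ∈ Irr(N) is a non-trivial character that extends to χ ∈ Irr(G), and χ = λ^G for some subgroup H ≤ G and λ ∈ Irr(H), then HN = G, the restriction λ_{H∩N} is irreducible, and θ = (λ_{H∩N})^N. -/
open CategoryTheory BigOperators
open scoped Classical

noncomputable section

/-- `χ` is an irreducible complex character of the finite group `G`. -/
def IsIrrChar {G : Type} [Group G] [Fintype G] (χ : G → ℂ) : Prop :=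
  ∃ V : FDRep ℂ G, Simple V ∧ χ = V.character

/-- The class function on `G` induced from the function `η` on the subgroup `H`. -/
def indChar {G : Type} [Group G] [Fintype G] (H : Subgroup G) (η : H → ℂ) : G → ℂ :=
  fun g => (Fintype.card H : ℂ)⁻¹ *
    ∑ x : G, if h : x⁻¹ * g * x ∈ H then η ⟨x⁻¹ * g * x, h⟩ else 0

/-- `χ` is monomial: induced from a linear character of some subgroup. -/
def IsMonomial {G : Type} [Group G] [Fintype G] (χ : G → ℂ) : Prop :=
  ∃ (H : Subgroup G) (η : H →* ℂ), χ = indChar H fun h => η h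

/-- `χ` is primitive: not induced from an (irreducible) character of a proper subgroup. -/
def IsPrimitive {G : Type} [Group G] [Fintype G] (χ : G → ℂ) : Prop :=
  ¬ ∃ (H : Subgroup G), H ≠ ⊤ ∧ ∃ η : H → ℂ, IsIrrChar η ∧ χ = indChar H η

/-- The usual hermitian inner product of class functions. -/
def charInner {H : Type} [Group H] [Fintype H] (α β : H → ℂ) : ℂ :=
  (Fintype.card H : ℂ)⁻¹ * ∑ h, α h * (starRingEnd ℂ) (β h)

/-- Extension by zero of a function on `H`. -/
def extZ {G : Type} [Group G] (H : Subgroup G) (η : H → ℂ) (g : G) : ℂ :=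
  if h : g ∈ H then η ⟨g, h⟩ else 0

theorem extZ_conj {G : Type} [Group G] (H : Subgroup G) (η : H → ℂ)
    (hη : ∀ a b : H, η (a⁻¹ * b * a) = η b) (g : G) (a : H) :
    extZ H η ((a : G)⁻¹ * g * a) = extZ H η g := by
  unfold extZ
  by_cases hg : g ∈ H
  · have h2 : (a : G)⁻¹ * g * a ∈ H := H.mul_mem (H.mul_mem (H.inv_mem a.2) hg) a.2
    rw [dif_pos hg, dif_pos h2]
    exact hη a ⟨g, hg⟩
  · have h2 : ¬ ((a : G)⁻¹ * g * a ∈ H) := by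
      intro h
      apply hg
      have := H.mul_mem (H.mul_mem a.2 h) (H.inv_mem a.2)
      simpa [mul_assoc] using this
    rw [dif_neg hg, dif_neg h2]

theorem card_mul_indChar {G : Type} [Group G] [Fintype G] (H : Subgroup G) (η : H → ℂ) (g : G) :
    (Fintype.card H : ℂ) * indChar H η g = ∑ x : G, extZ H η (x⁻¹ * g * x) := by
  unfold indChar extZ
  rw [← mul_assoc, mul_inv_cancel₀, one_mul]
  exact_mod_cast Fintype.card_ne_zero

theorem sum_subgroup_eq {G : Type} [Group G] [Fintype G] (N : Subgroup G) (f : G → ℂ) :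
    ∑ n : N, f n = ∑ g : G, if g ∈ N then f g else 0 := by
  rw [← Finset.sum_filter]
  exact (Finset.sum_subtype _ (by simp) f).symm

theorem key_sum {G : Type} [Group G] [Fintype G] (N H : Subgroup G) [hN : N.Normal]
    (χ : G → ℂ) (hcl : ∀ x g : G, χ (x * g * x⁻¹) = χ g)
    (lam : H → ℂ) (hind : χ = indChar H lam) :
    (Fintype.card H : ℂ) * ∑ n : N, χ n * χ (n : G)⁻¹ =
      Fintype.card G * ∑ u : G, if u ∈ N then extZ H lam u * χ u⁻¹ else 0 := by
  rw [sum_subgroup_eq N (fun g => χ g * χ g⁻¹), Finset.mul_sum]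
  have h1 : ∀ g : G, (Fintype.card H : ℂ) * (if g ∈ N then χ g * χ g⁻¹ else 0) =
      ∑ x : G, if g ∈ N then extZ H lam (x⁻¹ * g * x) * χ g⁻¹ else 0 := by
    intro g
    split_ifs
    · rw [← mul_assoc, ← Finset.sum_mul, ← card_mul_indChar, ← hind]
    · simp
  rw [Finset.sum_congr rfl (fun g _ => h1 g), Finset.sum_comm]
  have h2 : ∀ x : G, (∑ g : G, if g ∈ N then extZ H lam (x⁻¹ * g * x) * χ g⁻¹ else 0) =
      ∑ u : G, if u ∈ N then extZ H lam u * χ u⁻¹ else 0 := by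
    intro x
    rw [← Equiv.sum_comp (MulAut.conj x).toEquiv]
    refine Finset.sum_congr rfl fun u _ => ?_
    have e1 : (MulAut.conj x).toEquiv u = x * u * x⁻¹ := rfl
    rw [e1]
    have e2 : x * u * x⁻¹ ∈ N ↔ u ∈ N := by
      rw [← hN.mem_comm_iff]; simp
    have e3 : x⁻¹ * (x * u * x⁻¹) * x = u := by group
    have e4 : (x * u * x⁻¹)⁻¹ = x * u⁻¹ * x⁻¹ := by group
    simp only [e2, e3, e4, hcl]
  rw [Finset.sum_congr rfl (fun x _ => h2 x)]
  simp

theorem sum_inf_eq {G : Type} [Group G] [Fintype G] (N H : Subgroup G) (lam : H → ℂ)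
    (f : G → ℂ) :
    (∑ u : G, if u ∈ N then extZ H lam u * f u else 0) =
      ∑ d : (H ⊓ N : Subgroup G), lam ⟨d.1, (Subgroup.mem_inf.mp d.2).1⟩ * f d := by
  have : ∀ d : (H ⊓ N : Subgroup G), lam ⟨d.1, (Subgroup.mem_inf.mp d.2).1⟩ * f d =
      (fun g => extZ H lam g * f g) d := by
    intro d
    simp only [extZ, dif_pos (Subgroup.mem_inf.mp d.2).1]
  rw [Finset.sum_congr rfl (fun d _ => this d), sum_subgroup_eq (H ⊓ N) (fun g => extZ H lam g * f g)]
  refine Finset.sum_congr rfl fun u _ => ?_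
  by_cases hu : u ∈ N <;> by_cases hh : u ∈ H <;> simp [extZ, hu, hh, Subgroup.mem_inf]

theorem card_sup_mul {G : Type} [Group G] [Fintype G] (N H : Subgroup G) [N.Normal] :
    Nat.card H * Nat.card N = Nat.card (H ⊓ N : Subgroup G) * Nat.card (H ⊔ N : Subgroup G) := by
  have h1 : Nat.card (H ⊓ N : Subgroup G) * N.relIndex H = Nat.card H := by
    rw [← Subgroup.inf_relIndex_left]
    have := Subgroup.relIndex_mul_relIndex ⊥ (H ⊓ N) H bot_le inf_le_left
    simpa using this
  have h2 : Nat.card N * N.relIndex (H ⊔ N) = Nat.card (H ⊔ N : Subgroup G) := by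
    have := Subgroup.relIndex_mul_relIndex ⊥ N (H ⊔ N) bot_le le_sup_right
    simpa using this
  rw [← h1, ← h2, Subgroup.relIndex_sup_right]
  ring

theorem sum_cosets {G : Type} [Group G] [Fintype G] (N H : Subgroup G) [hN : N.Normal]
    (hHN : H ⊔ N = ⊤) (Φ : G → ℂ) (hΦ : ∀ (g : G) (a : H), Φ (g * a) = Φ g) :
    (Fintype.card (H ⊓ N : Subgroup G) : ℂ) * ∑ x : G, Φ x = Fintype.card H * ∑ y : N, Φ y := by
  have h1 : ∑ a : H, ∑ g : G, (if g ∈ N then Φ (g * a) else 0) =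
      Fintype.card H * ∑ y : N, Φ y := by
    simp only [hΦ, sum_subgroup_eq N Φ]
    simp
  rw [← h1]
  have h2 : ∀ a : H, ∑ g : G, (if g ∈ N then Φ (g * a) else 0) =
      ∑ x : G, (if x * (a : G)⁻¹ ∈ N then Φ x else 0) := by
    intro a
    rw [← Equiv.sum_comp (Equiv.mulRight (a : G))
      (fun x => if x * (a : G)⁻¹ ∈ N then Φ x else 0)]
    simp
  rw [Finset.sum_congr rfl (fun a _ => h2 a), Finset.sum_comm, Finset.mul_sum]
  refine Finset.sum_congr rfl fun x _ => ?_
  have hx : x ∈ N ⊔ H := by rw [sup_comm, hHN]; trivial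
  obtain ⟨y, hy, b, hb, rfl⟩ := (Subgroup.mem_sup_of_normal_left).mp hx
  have h3 : ∀ a : H, (y * b * (a : G)⁻¹ ∈ N) ↔ b * (a : G)⁻¹ ∈ N := by
    intro a
    rw [mul_assoc]
    exact Subgroup.mul_mem_cancel_left N hy
  simp only [h3]
  rw [← Equiv.sum_comp (Equiv.mulRight (⟨b, hb⟩ : H))]
  have h4 : ∀ a : H, (b * ((Equiv.mulRight (⟨b, hb⟩ : H) a : H) : G)⁻¹ ∈ N) ↔ (a : G) ∈ N := by
    intro a
    simp
  simp only [h4]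
  rw [sum_subgroup_eq H (fun g => if g ∈ N then Φ (y * b) else 0)]
  have h5 := sum_subgroup_eq (H ⊓ N) (fun _ => Φ (y * b))
  rw [Finset.sum_const, Finset.card_univ, nsmul_eq_mul] at h5
  rw [h5]
  refine Finset.sum_congr rfl fun u _ => ?_
  by_cases hu : u ∈ N <;> by_cases hh : u ∈ H <;> simp [hu, hh, Subgroup.mem_inf]

/-- Restriction of a representation along a homomorphism. -/
abbrev resF {A B : Type} [Group A] [Group B] (f : A →* B) (V : FDRep ℂ B) : FDRep ℂ A :=
  (Action.res (FGModuleCat ℂ) f).obj V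

theorem resF_char {A B : Type} [Group A] [Group B] (f : A →* B) (V : FDRep ℂ B) (a : A) :
    (resF f V).character a = V.character (f a) := rfl

theorem finrank_formula {A : Type} [Group A] [Fintype A] (V W : FDRep ℂ A) :
    ∑ g : A, W.character g * V.character g⁻¹ =
      (Nat.card A : ℂ) * (Module.finrank ℂ (V ⟶ W) : ℂ) := by
  have h0 : (Nat.card A : ℂ) ≠ 0 := by exact_mod_cast Nat.card_pos.ne'
  have := invertibleOfNonzero h0
  rw [← FDRep.scalar_product_char_eq_finrank_equivariant, ← mul_assoc, mul_inv_cancel₀ h0, one_mul]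

theorem simple_of_res {A B : Type} [Group A] [Fintype A] [Group B] [Fintype B] (i : A →* B)
    (V W : FDRep ℂ B) [Simple W] (f : V ⟶ W) (hf : f ≠ 0)
    (hone : Module.finrank ℂ (resF i V ⟶ resF i W) = 1) : Simple (resF i W) := by
  have : Epi f := epi_of_nonzero_to_simple hf
  let s := Projective.factorThru (𝟙 W) f
  have hs : s ≫ f = 𝟙 W := Projective.factorThru_comp _ _
  let f' : resF i V ⟶ resF i W := (Action.res (FGModuleCat ℂ) i).map f
  let s' : resF i W ⟶ resF i V := (Action.res (FGModuleCat ℂ) i).map s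
  have hs' : s' ≫ f' = 𝟙 _ := by
    rw [← Functor.map_comp, hs, CategoryTheory.Functor.map_id]
  rw [FDRep.simple_iff_end_is_rank_one]
  apply le_antisymm
  · rw [← hone]
    refine LinearMap.finrank_le_finrank_of_injective (f := Linear.leftComp ℂ (resF i W) f') ?_
    intro a b hab
    have hab' : f' ≫ a = f' ≫ b := hab
    have := congrArg (fun t => s' ≫ t) hab'
    simpa [← Category.assoc, hs'] using this
  · have hne : 𝟙 (resF i W) ≠ 0 := by
      intro h
      apply id_nonzero W
      apply Action.Hom.ext
      have h' := congrArg Action.Hom.hom h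
      exact h'
    exact Module.finrank_pos_iff_exists_ne_zero.mpr ⟨_, hne⟩

/-- Lemma 2.8(1) of Qian–Pan: if a nontrivial character of a perfect normal subgroup
`N` extends to `χ ∈ Irr(G)` and `χ = λ^G` for `λ ∈ Irr(H)`, then `HN = G`,
`λ` restricts irreducibly to `H ∩ N`, and `θ = (λ_{H∩N})^N`. -/
theorem extension_induced_structure (G : Type) [Group G] [Fintype G]
    (N H : Subgroup G) [N.Normal] (hN1 : N ≠ ⊥) (hNperf : ⁅N, N⁆ = N)
    (θ : N → ℂ) (hθ : IsIrrChar θ) (hθnt : θ ≠ fun _ => 1)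
    (χ : G → ℂ) (hχ : IsIrrChar χ) (hext : ∀ n : N, χ n = θ n)
    (lam : H → ℂ) (hlam : IsIrrChar lam) (hind : χ = indChar H lam) :
    H ⊔ N = ⊤ ∧
    IsIrrChar (fun x : (H ⊓ N : Subgroup G) => lam ⟨x.1, (Subgroup.mem_inf.mp x.2).1⟩) ∧
    θ = indChar ((H ⊓ N).subgroupOf N)
      (fun y => lam ⟨(y.1 : G), (Subgroup.mem_inf.mp (Subgroup.mem_subgroupOf.mp y.2)).1⟩) := by
  obtain ⟨V, hV, rfl⟩ := hχ
  obtain ⟨W, hW, rfl⟩ := hlam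
  obtain ⟨T, hT, rfl⟩ := hθ
  have hcl : ∀ x g : G, V.character (x * g * x⁻¹) = V.character g := fun x g => V.char_conj g x
  have hGpos : (Nat.card G : ℂ) ≠ 0 := by exact_mod_cast Nat.card_pos.ne'
  have hHpos : (Nat.card H : ℂ) ≠ 0 := by exact_mod_cast Nat.card_pos.ne'
  have hDpos : (Nat.card (H ⊓ N : Subgroup G) : ℂ) ≠ 0 := by exact_mod_cast Nat.card_pos.ne'
  have hfin1 : Module.finrank ℂ (resF H.subtype V ⟶ W) = 1 := by
    have hk := key_sum (⊤ : Subgroup G) H V.character hcl W.character hind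
    rw [sum_subgroup_eq ⊤ (fun g => V.character g * V.character g⁻¹)] at hk
    simp only [Subgroup.mem_top, if_true] at hk
    rw [(FDRep.simple_iff_char_is_norm_one V).mp hV] at hk
    have h1 : ∑ u : G, extZ H W.character u * V.character u⁻¹ =
        ∑ h : H, W.character h * (resF H.subtype V).character h⁻¹ := by
      have : ∀ h : H, W.character h * (resF H.subtype V).character h⁻¹ =
          (fun g => extZ H W.character g * V.character g⁻¹) (h : G) := by
        intro h
        simp only [extZ, dif_pos h.2]
        rfl
      rw [Finset.sum_congr rfl (fun d _ => this d),
        sum_subgroup_eq H (fun g => extZ H W.character g * V.character g⁻¹)]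
      refine Finset.sum_congr rfl fun u _ => ?_
      by_cases hu : u ∈ H <;> simp [extZ, hu]
    rw [h1, finrank_formula, Fintype.card_eq_nat_card, Fintype.card_eq_nat_card] at hk
    have h2 : (Nat.card H : ℂ) * Nat.card G * 1 =
      (Nat.card H : ℂ) * Nat.card G * (Module.finrank ℂ (resF H.subtype V ⟶ W) : ℂ) := by
      linear_combination hk
    have h3 := mul_left_cancel₀ (mul_ne_zero hHpos hGpos) h2
    exact_mod_cast h3.symm
  obtain ⟨f, hf⟩ : ∃ f : resF H.subtype V ⟶ W, f ≠ 0 :=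
    Module.finrank_pos_iff_exists_ne_zero (R := ℂ).mp (by omega)
  let i : (H ⊓ N : Subgroup G) →* H := Subgroup.inclusion inf_le_left
  have hm : Nat.card (H ⊔ N : Subgroup G) =
      Nat.card G * Module.finrank ℂ (resF i (resF H.subtype V) ⟶ resF i W) := by
    have hk := key_sum N H V.character hcl W.character hind
    have h0 : ∑ n : N, V.character n * V.character (n : G)⁻¹ = Nat.card N := by
      rw [← (FDRep.simple_iff_char_is_norm_one T).mp hT]
      refine Finset.sum_congr rfl fun n _ => ?_
      rw [← hext, ← hext]; rfl
    rw [h0, sum_inf_eq N H W.character (fun g => V.character g⁻¹)] at hk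
    have h1 : ∑ d : (H ⊓ N : Subgroup G),
        W.character ⟨d.1, (Subgroup.mem_inf.mp d.2).1⟩ * V.character (d : G)⁻¹ =
        ∑ d : (H ⊓ N : Subgroup G),
          (resF i W).character d * (resF i (resF H.subtype V)).character d⁻¹ := rfl
    rw [h1, finrank_formula, Fintype.card_eq_nat_card, Fintype.card_eq_nat_card] at hk
    have h2 : Nat.card H * Nat.card N = Nat.card G * (Nat.card (H ⊓ N : Subgroup G) *
      Module.finrank ℂ (resF i (resF H.subtype V) ⟶ resF i W)) := by exact_mod_cast hk
    rw [card_sup_mul] at h2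
    apply Nat.eq_of_mul_eq_mul_left (Nat.card_pos (α := (H ⊓ N : Subgroup G)))
    rw [h2]; ring
  have hle : Nat.card (H ⊔ N : Subgroup G) ≤ Nat.card G := Subgroup.card_le_card_group _
  have hpos : 0 < Nat.card (H ⊔ N : Subgroup G) := Nat.card_pos
  have hm1 : Module.finrank ℂ (resF i (resF H.subtype V) ⟶ resF i W) = 1 := by
    have hg : 0 < Nat.card G := Nat.card_pos
    apply le_antisymm
    · by_contra hc
      push Not at hc
      nlinarith
    · by_contra hc
      have : Module.finrank ℂ (resF i (resF H.subtype V) ⟶ resF i W) = 0 := by omega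
      rw [this] at hm
      omega
  have htop : H ⊔ N = ⊤ := Subgroup.eq_top_of_card_eq _ (by rw [hm, hm1, mul_one])
  refine ⟨htop, ⟨resF i W, simple_of_res i _ W f hf hm1, rfl⟩, ?_⟩
  funext n
  have hc := card_mul_indChar H W.character (n : G)
  rw [← hind, hext] at hc
  have hs := sum_cosets N H htop (fun x => extZ H W.character (x⁻¹ * n * x)) (by
    intro g a
    have := extZ_conj H W.character (fun a b => by simpa using W.char_conj b a⁻¹)
      (g⁻¹ * n * g) a
    rw [← this]
    congr 1
    group)
  rw [← hc] at hs
  have hcard : (Fintype.card ((H ⊓ N).subgroupOf N) : ℂ) =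
      Fintype.card (H ⊓ N : Subgroup G) := by
    rw [Fintype.card_congr (Subgroup.subgroupOfEquivOfLe (inf_le_right : H ⊓ N ≤ N)).toEquiv]
  rw [← Fintype.card_eq_nat_card] at hHpos hDpos
  have hs2 : (Fintype.card (H ⊓ N : Subgroup G) : ℂ) * T.character n =
      ∑ y : N, extZ H W.character ((y : G)⁻¹ * n * y) := by
    apply mul_left_cancel₀ hHpos
    rw [← hs]; ring
  apply mul_left_cancel₀ hDpos
  rw [hs2, ← hcard, card_mul_indChar]
  refine Finset.sum_congr rfl fun y _ => ?_
  unfold extZ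
  have hiff : y⁻¹ * n * y ∈ (H ⊓ N).subgroupOf N ↔ (y : G)⁻¹ * n * y ∈ H := by
    rw [Subgroup.mem_subgroupOf, Subgroup.mem_inf]
    exact ⟨fun h => h.1, fun h => ⟨h, (y⁻¹ * n * y).2⟩⟩
  by_cases h : (y : G)⁻¹ * n * y ∈ H
  · rw [dif_pos h, dif_pos (hiff.mpr h)]
    rfl
  · rw [dif_neg h, dif_neg (fun h' => h (hiff.mp h'))]
end
end

section
/- Let N be a perfect normal subgroup of a finite group G and let θ ∈ Irr(N) be non-trivial, extending to χ ∈ Irr(G). If θ(1) is minimal among the degrees of non-trivial irreducible characters of N, then χ is a primitive character of G. -/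
open CategoryTheory BigOperators
open scoped Classical

noncomputable section

/-- An irreducible representation gives an irreducible character. -/
lemma isIrrChar_of_irreducible {K : Type} [Group K] [Fintype K] {V : Type} [AddCommGroup V]
    [Module ℂ V] [FiniteDimensional ℂ V] (ρ : Representation ℂ K V) (h : ρ.IsIrreducible) :
    IsIrrChar (ρ.character) := by
  refine ⟨FDRep.of ρ, ?_, rfl⟩
  rw [FDRep.simple_iff_char_is_norm_one]
  have := invertibleOfNonzero (NeZero.ne (Nat.card K : ℂ))
  have h1 := Representation.char_orthonormal ρ ρ
  rw [if_pos ⟨Representation.Equiv.refl ρ⟩,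
    inv_mul_eq_one₀ (NeZero.ne (Nat.card K : ℂ))] at h1
  exact h1.symm

/-- A nontrivial representation has a nontrivial irreducible constituent. -/
lemma exists_irreducible_nontrivial {K : Type} [Group K] [Fintype K] (d : ℕ) :
    ∀ (V : Type) [AddCommGroup V] [Module ℂ V] [FiniteDimensional ℂ V]
      (ρ : Representation ℂ K V), Module.finrank ℂ V = d → (∃ g v, ρ g v ≠ v) →
      ∃ (W : Type) (_ : AddCommGroup W) (_ : Module ℂ W) (_ : FiniteDimensional ℂ W)
        (σ : Representation ℂ K W), σ.IsIrreducible ∧ (∃ g w, σ g w ≠ w) ∧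
          Module.finrank ℂ W ≤ d := by
  induction d using Nat.strong_induction_on with
  | _ d ih =>
    intro V _ _ _ ρ hd hnt
    by_cases hirr : ρ.IsIrreducible
    · exact ⟨V, _, _, ‹_›, ρ, hirr, hnt, hd.le⟩
    · have hne : (⊥ : Subrepresentation ρ) ≠ ⊤ := by
        intro h
        obtain ⟨g, v, hv⟩ := hnt
        have key : ∀ w : V, w = 0 := by
          intro w
          have h2 : w ∈ (⊤ : Subrepresentation ρ).toSubmodule := Submodule.mem_top
          rw [← h] at h2
          exact (Submodule.mem_bot ℂ).1 h2
        exact hv ((key _).trans (key _).symm)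
      obtain ⟨T, hT1, hT2⟩ : ∃ T : Subrepresentation ρ, T ≠ ⊥ ∧ T ≠ ⊤ := by
        by_contra! hcon
        apply hirr
        exact { exists_pair_ne := ⟨⊥, ⊤, hne⟩
                eq_bot_or_eq_top := fun T => by
                  by_cases h : T = ⊥
                  · exact Or.inl h
                  · exact Or.inr (hcon T h) }
      obtain ⟨T', hT'⟩ := exists_isCompl T
      have hT'2 : T' ≠ ⊤ := by
        rintro rfl
        exact hT1 (by simpa using hT'.inf_eq_bot)
      have hlt : ∀ S : Subrepresentation ρ, S ≠ ⊤ → Module.finrank ℂ S.toSubmodule < d := by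
        intro S hS
        rw [← hd]
        apply Submodule.finrank_lt
        intro h
        exact hS (Subrepresentation.toSubmodule_injective h)
      have hcase : ∀ S : Subrepresentation ρ, S ≠ ⊤ →
          (∃ g, ∃ v ∈ S.toSubmodule, ρ g v ≠ v) →
          ∃ (W : Type) (_ : AddCommGroup W) (_ : Module ℂ W) (_ : FiniteDimensional ℂ W)
            (σ : Representation ℂ K W), σ.IsIrreducible ∧ (∃ g w, σ g w ≠ w) ∧
              Module.finrank ℂ W ≤ d := by
        rintro S hS ⟨g, v, hv, hgv⟩
        obtain ⟨W, i1, i2, i3, σ, h1, h2, h3⟩ := ih _ (hlt S hS) S.toSubmodule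
          S.toRepresentation rfl ⟨g, ⟨v, hv⟩, fun h => hgv (congrArg Subtype.val h)⟩
        exact ⟨W, i1, i2, i3, σ, h1, h2, h3.trans (hlt S hS).le⟩
      by_cases c1 : ∃ g, ∃ v ∈ T.toSubmodule, ρ g v ≠ v
      · exact hcase T hT2 c1
      by_cases c2 : ∃ g, ∃ v ∈ T'.toSubmodule, ρ g v ≠ v
      · exact hcase T' hT'2 c2
      exfalso
      push Not at c1 c2
      obtain ⟨g, v, hv⟩ := hnt
      have hsup : T.toSubmodule ⊔ T'.toSubmodule = ⊤ := by
        rw [← Subrepresentation.toSubmodule_sup, hT'.sup_eq_top]; rfl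
      have hvm : v ∈ T.toSubmodule ⊔ T'.toSubmodule := hsup ▸ Submodule.mem_top
      obtain ⟨a, ha, b, hb, rfl⟩ := Submodule.mem_sup.1 hvm
      exact hv (by rw [map_add, c1 g a ha, c2 g b hb])

/-- A representation whose character is constantly `1` is trivial. -/
lemma trivial_of_char_one {K : Type} [Group K] {V : Type} [AddCommGroup V]
    [Module ℂ V] [FiniteDimensional ℂ V] (ρ : Representation ℂ K V)
    (h : ρ.character = fun _ => 1) (g : K) (v : V) : ρ g v = v := by
  have h1 : Module.finrank ℂ V = 1 := by
    have := congrFun h 1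
    rw [Representation.char_one] at this
    exact_mod_cast this
  obtain ⟨v₀, hv₀, hsp⟩ := finrank_eq_one_iff'.1 h1
  obtain ⟨c, hc⟩ := hsp (ρ g v₀)
  have h2 : ρ g = c • LinearMap.id := by
    ext w
    obtain ⟨a, rfl⟩ := hsp w
    simp [← hc, smul_comm a c]
  have h3 := congrFun h g
  rw [Representation.character, h2, map_smul, LinearMap.trace_id, h1] at h3
  have h4 : c = 1 := by simpa using h3
  rw [h2, h4]; simp

/-- The permutation representation on functions. -/
def permRep (K X : Type) [Group K] [MulAction K X] : Representation ℂ K (X → ℂ) where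
  toFun g := LinearMap.funLeft ℂ ℂ (fun x => g⁻¹ • x)
  map_one' := by ext; simp [LinearMap.funLeft]
  map_mul' a b := by
    refine LinearMap.ext fun f => funext fun x => ?_
    simp [LinearMap.funLeft, mul_smul]

lemma permRep_apply (K X : Type) [Group K] [MulAction K X] (g : K) (f : X → ℂ) (x : X) :
    permRep K X g f x = f (g⁻¹ • x) := rfl

/-- The sum-zero subrepresentation. -/
def sumZero (K X : Type) [Group K] [MulAction K X] [Fintype X] :
    Subrepresentation (permRep K X) where
  toSubmodule :=
    { carrier := {f | ∑ x, f x = 0}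
      add_mem' := by
        intro a b ha hb
        simp only [Set.mem_ofPred_eq, Pi.add_apply, Finset.sum_add_distrib] at *
        rw [ha, hb, add_zero]
      zero_mem' := by simp
      smul_mem' := by
        intro c a ha
        simp only [Set.mem_ofPred_eq, Pi.smul_apply, ← Finset.smul_sum] at *
        rw [ha, smul_zero] }
  apply_mem_toSubmodule := by
    intro g f hf
    change ∑ x, f (g⁻¹ • x) = 0
    rw [← show ∑ x, f x = 0 from hf]
    exact Equiv.sum_comp (MulAction.toPerm g⁻¹) f

/-- A nontrivial permutation action yields a nontrivial irreducible character of small degree. -/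
lemma exists_small_irrChar {K X : Type} [Group K] [Fintype K] [MulAction K X] [Fintype X]
    (g : K) (a : X) (hga : g • a ≠ a) :
    ∃ ψ : K → ℂ, IsIrrChar ψ ∧ ψ ≠ (fun _ => 1) ∧ (ψ 1).re < Fintype.card X := by
  have hlt : Module.finrank ℂ (sumZero K X).toSubmodule < Fintype.card X := by
    rw [← Module.finrank_fintype_fun_eq_card ℂ (η := X)]
    apply Submodule.finrank_lt
    intro h
    have h1 : (Pi.single a 1 : X → ℂ) ∈ (sumZero K X).toSubmodule := h ▸ Submodule.mem_top
    have h2 : ∑ x, (Pi.single a 1 : X → ℂ) x = 0 := h1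
    simp at h2
  obtain ⟨W, i1, i2, i3, σ, h1, ⟨k, w, h2⟩, h3⟩ := exists_irreducible_nontrivial _
    (sumZero K X).toSubmodule (sumZero K X).toRepresentation rfl
    ⟨g, ⟨Pi.single a 1 - Pi.single (g • a) 1, by
      change ∑ x, (Pi.single a 1 - Pi.single (g • a) 1 : X → ℂ) x = 0
      simp⟩, by
      intro h
      have h' := congrFun (congrArg Subtype.val h) a
      change (Pi.single a 1 - Pi.single (g • a) 1 : X → ℂ) (g⁻¹ • a) =
        (Pi.single a 1 - Pi.single (g • a) 1 : X → ℂ) a at h'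
      have e1 : g⁻¹ • a ≠ a := fun e => hga (by rw [inv_smul_eq_iff] at e; exact e.symm)
      simp only [Pi.sub_apply, Pi.single_apply, if_neg e1, if_neg hga.symm] at h'
      split_ifs at h' <;> norm_num at h'⟩
  refine ⟨σ.character, isIrrChar_of_irreducible σ h1, ?_, ?_⟩
  · intro h
    exact h2 (trivial_of_char_one σ h k w)
  · rw [Representation.char_one, Complex.natCast_re]
    exact_mod_cast h3.trans_lt hlt

/-- An irreducible character has positive degree. -/
lemma irrChar_one {K : Type} [Group K] [Fintype K] (V : FDRep ℂ K) (h : Simple V) :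
    0 < Module.finrank ℂ V := by
  by_contra h0
  have h0 : Module.finrank ℂ V = 0 := by omega
  rw [FDRep.simple_iff_char_is_norm_one] at h
  have : Subsingleton V := Module.finrank_zero_iff.1 h0
  have hz : ∀ g, V.character g = 0 := by
    intro g
    have : V.ρ g = 0 := Subsingleton.elim _ _
    rw [FDRep.character, this, map_zero]
  simp only [hz, mul_zero, Finset.sum_const_zero] at h
  exact NeZero.ne (Nat.card K : ℂ) h.symm

/-- Lemma 2.8(2) of Qian–Pan: an extension to `G` of a nontrivial character of minimal
degree of a perfect normal subgroup is primitive. -/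
theorem extension_of_minimal_degree_primitive (G : Type) [Group G] [Fintype G]
    (N : Subgroup G) [N.Normal] (hN1 : N ≠ ⊥) (hNperf : ⁅N, N⁆ = N)
    (θ : N → ℂ) (hθ : IsIrrChar θ) (hθnt : θ ≠ fun _ => 1)
    (hmin : ∀ θ' : N → ℂ, IsIrrChar θ' → θ' ≠ (fun _ => 1) → (θ 1).re ≤ (θ' 1).re)
    (χ : G → ℂ) (hχ : IsIrrChar χ) (hext : ∀ n : N, χ n = θ n) :
    IsPrimitive χ := by
  rintro ⟨H, hH, η, ⟨E, hE, rfl⟩, hind⟩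
  have hHcard : (Fintype.card H : ℂ) ≠ 0 := by exact_mod_cast Fintype.card_ne_zero
  have hidx : (Fintype.card G : ℂ) = (Fintype.card (G ⧸ H) : ℂ) * Fintype.card H := by
    have := Subgroup.card_eq_card_quotient_mul_card_subgroup H
    simp only [Nat.card_eq_fintype_card] at this
    exact_mod_cast this
  by_cases hle : N ≤ H
  · -- `N ≤ H`
    obtain ⟨C, hC, rfl⟩ := hχ
    obtain ⟨T, hT, rfl⟩ := hθ
    let σ : Representation ℂ N E := (E.ρ : Representation ℂ H E).comp (Subgroup.inclusion hle)
    have := invertibleOfNonzero (NeZero.ne (Nat.card N : ℂ))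
    have hk := Representation.card_inv_mul_sum_char_mul_char_eq_finrank
      (G := N) (k := ℂ) (T.ρ : Representation ℂ N T) σ
    set k := Module.finrank ℂ (Representation.IntertwiningMap (T.ρ : Representation ℂ N T) σ)
    rw [inv_mul_eq_iff_eq_mul₀ (NeZero.ne (Nat.card N : ℂ))] at hk
    have hn := (FDRep.simple_iff_char_is_norm_one T).1 hT
    have hTval : ∀ n : N, T.character n = (Fintype.card H : ℂ)⁻¹ *
        ∑ x : G, σ.character ((MulAut.conjNormal x).symm n) := by
      intro n
      rw [← hext, hind, indChar]
      congr 1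
      refine Finset.sum_congr rfl fun x _ => ?_
      have hm : x⁻¹ * (n : G) * x ∈ H := by
        rw [← MulAut.conjNormal_symm_apply]
        exact hle (Subtype.property _)
      rw [dif_pos hm]
      change _ = E.character (Subgroup.inclusion hle _)
      congr 1
      exact Subtype.ext (MulAut.conjNormal_symm_apply x n).symm
    have hTinv : ∀ (n : N) (x : G), T.character n⁻¹ =
        T.character (((MulAut.conjNormal x).symm n)⁻¹) := by
      intro n x
      rw [← hext, ← hext, ← map_inv, MulAut.conjNormal_symm_apply]
      have := FDRep.char_conj C ((n⁻¹ : N) : G) x⁻¹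
      rw [inv_inv] at this
      exact this.symm
    have hsum : ∑ n : N, T.character n * T.character n⁻¹ =
        (Fintype.card H : ℂ)⁻¹ * (Fintype.card G * (Nat.card N * k)) := by
      calc ∑ n : N, T.character n * T.character n⁻¹
          = (Fintype.card H : ℂ)⁻¹ * ∑ x : G, ∑ n : N,
              σ.character ((MulAut.conjNormal x).symm n) *
                T.character (((MulAut.conjNormal x).symm n)⁻¹) := by
            rw [Finset.sum_comm, Finset.mul_sum]
            refine Finset.sum_congr rfl fun n _ => ?_
            rw [hTval n, mul_assoc, Finset.sum_mul]
            congr 1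
            refine Finset.sum_congr rfl fun x _ => ?_
            rw [← hTinv n x]
        _ = _ := by
            congr 1
            have hx : ∀ x : G, ∑ n : N, σ.character ((MulAut.conjNormal x).symm n) *
                T.character (((MulAut.conjNormal x).symm n)⁻¹) = Nat.card N * k := fun x =>
              (Equiv.sum_comp (MulAut.conjNormal (H := N) x).symm.toEquiv
                (fun m : N => σ.character m * T.character m⁻¹)).trans hk
            rw [Finset.sum_congr rfl fun x _ => hx x]
            simp
    rw [hn] at hsum
    have hN0 := NeZero.ne (Nat.card N : ℂ)
    have h5 : (Fintype.card H : ℂ) = Fintype.card G * k := by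
      field_simp at hsum
      exact hsum
    have h6 : Fintype.card H = Fintype.card G * k := by exact_mod_cast h5
    have h7 : Fintype.card G ≤ Fintype.card H := by
      have : k ≠ 0 := by
        intro h0
        rw [h0, mul_zero] at h6
        exact Fintype.card_ne_zero h6
      rw [h6]
      exact Nat.le_mul_of_pos_right _ (Nat.pos_of_ne_zero this)
    apply hH
    apply Subgroup.eq_top_of_le_card
    simpa only [Nat.card_eq_fintype_card] using h7
  · obtain ⟨n, hnN, hnH⟩ := SetLike.not_le_iff_exists.1 hle
    obtain ⟨ψ, h1, h2, h3⟩ := exists_small_irrChar (K := N) (X := G ⧸ H) ⟨n, hnN⟩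
      ((1 : G) : G ⧸ H) (by
        intro h
        change ((n * 1 : G) : G ⧸ H) = ((1 : G) : G ⧸ H) at h
        rw [mul_one, eq_comm, QuotientGroup.eq] at h
        exact hnH (by simpa using h))
    have h4 := hmin ψ h1 h2
    have h5 : θ 1 = (Fintype.card (G ⧸ H) * Module.finrank ℂ E : ℕ) := by
      rw [← hext, hind, indChar]
      have : ∀ x : G, (if h : x⁻¹ * ((1 : N) : G) * x ∈ H then
          E.character ⟨x⁻¹ * ((1 : N) : G) * x, h⟩ else 0) = (Module.finrank ℂ E : ℂ) := by
        intro x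
        have hx : x⁻¹ * ((1 : N) : G) * x = 1 := by simp
        rw [dif_pos (hx ▸ H.one_mem), ← FDRep.char_one]
        congr 1
        exact Subtype.ext hx
      rw [Finset.sum_congr rfl fun x _ => this x]
      simp only [Finset.sum_const, Finset.card_univ, nsmul_eq_mul, hidx]
      push_cast
      field_simp
    rw [h5, Complex.natCast_re] at h4
    have h6 : Fintype.card (G ⧸ H) ≤ Fintype.card (G ⧸ H) * Module.finrank ℂ E :=
      Nat.le_mul_of_pos_right _ (irrChar_one E hE)
    have h7 : (Fintype.card (G ⧸ H) : ℝ) ≤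
      (Fintype.card (G ⧸ H) * Module.finrank ℂ E : ℕ) := by exact_mod_cast h6
    linarith
end
end

section
/- Let N = S₁ × ⋯ × S_t be a minimal normal subgroup of a finite group G with each S_i isomorphic to a fixed non-abelian simple group S. If σ ∈ Irr(S) extends to Aut(S), then the character σ × ⋯ × σ of N extends to an irreducible character of G. -/
open CategoryTheory BigOperators
open scoped Classical

noncomputable section

/-- `α` acts on `S^t` through the index map `p` and coordinate automorphisms `β`. -/
def IsWr {S : Type} [Group S] {t : ℕ} (α : MulAut (Fin t → S))
    (p : Fin t → Fin t) (β : Fin t → MulAut S) : Prop :=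
  ∀ x j, α x j = β j (x (p j))

theorem isWr_exists {S : Type} [Group S] [Fintype S] [IsSimpleGroup S]
    (hna : ∃ a b : S, a * b ≠ b * a) {t : ℕ} (α : MulAut (Fin t → S)) :
    ∃ (p : Fin t → Fin t) (β : Fin t → MulAut S), IsWr α p β := by
  suffices h : ∀ j, ∃ (i : Fin t) (b : MulAut S), ∀ x, α x j = b (x i) by
    choose p β h using h
    exact ⟨p, β, fun x j => h j x⟩
  intro j
  let f : (Fin t → S) →* S := (Pi.evalMonoidHom (fun _ => S) j).comp α.toMonoidHom
  have hfs : Function.Surjective f := by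
    intro y
    obtain ⟨x, hx⟩ := α.surjective (fun _ => y)
    exact ⟨x, congrFun hx j⟩
  let φ : Fin t → S →* S := fun i => f.comp (MonoidHom.mulSingle (fun _ => S) i)
  have hnormal : ∀ i, (φ i).range.Normal := by
    intro i
    refine ⟨?_⟩
    rintro _ ⟨s, rfl⟩ g
    obtain ⟨x, rfl⟩ := hfs g
    refine ⟨x i * s * (x i)⁻¹, ?_⟩
    change f _ = f x * f _ * (f x)⁻¹
    rw [← map_inv, ← map_mul, ← map_mul]
    congr 1
    ext k
    by_cases hk : k = i
    · subst hk; simp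
    · simp [hk]
  have hcases : ∀ i, (φ i).range = ⊥ ∨ (φ i).range = ⊤ := fun i =>
    (hnormal i).eq_bot_or_eq_top
  have htriv : ∀ i, (φ i).range = ⊥ → ∀ s, f (Pi.mulSingle i s) = 1 := by
    intro i hi s
    have : φ i s ∈ (φ i).range := ⟨s, rfl⟩
    rw [hi] at this
    exact Subgroup.mem_bot.1 this
  have hex : ∃ i, (φ i).range = ⊤ := by
    by_contra hcon
    push Not at hcon
    have h1 : f = 1 := by
      apply MonoidHom.pi_ext
      intro i s
      exact htriv i ((hcases i).resolve_right (hcon i)) s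
    obtain ⟨a, b, hab⟩ := hna
    obtain ⟨x, rfl⟩ := hfs a
    simp [h1] at hab
  obtain ⟨i, hi⟩ := hex
  have hother : ∀ k, k ≠ i → ∀ s, f (Pi.mulSingle k s) = 1 := by
    intro k hk
    refine htriv k ((hcases k).resolve_right fun hk' => ?_)
    obtain ⟨a, b, hab⟩ := hna
    obtain ⟨x, hx⟩ : a ∈ (φ k).range := hk' ▸ Subgroup.mem_top a
    obtain ⟨y, hy⟩ : b ∈ (φ i).range := hi ▸ Subgroup.mem_top b
    apply hab
    rw [← hx, ← hy]
    change f _ * f _ = f _ * f _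
    rw [← map_mul, ← map_mul]
    exact congrArg f (Pi.mulSingle_commute (f := fun _ : Fin t => S) hk x y).eq
  have hsur : Function.Surjective (φ i) := MonoidHom.range_eq_top.1 hi
  have hfac : f = (φ i).comp (Pi.evalMonoidHom (fun _ => S) i) := by
    apply MonoidHom.pi_ext
    intro k s
    by_cases hk : k = i
    · subst hk
      change f _ = f (Pi.mulSingle k ((Pi.mulSingle k s : Fin t → S) k))
      simp
    · rw [hother k hk s]
      change 1 = f (Pi.mulSingle i ((Pi.mulSingle k s : Fin t → S) i))
      rw [Pi.mulSingle_eq_of_ne (Ne.symm hk)]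
      simp
  refine ⟨i, MulEquiv.ofBijective (φ i) (Finite.surjective_iff_bijective.1 hsur), fun x => ?_⟩
  exact DFunLike.congr_fun hfac x

theorem isWr_bij {S : Type} [Group S] [Nontrivial S] {t : ℕ} {α : MulAut (Fin t → S)}
    {p : Fin t → Fin t} {β : Fin t → MulAut S} (h : IsWr α p β) : Function.Bijective p := by
  rw [← Finite.surjective_iff_bijective]
  intro i
  by_contra hcon
  push Not at hcon
  obtain ⟨s, hs⟩ := exists_ne (1 : S)
  have h1 : α (Pi.mulSingle i s) = 1 := by
    ext j
    rw [h, Pi.mulSingle_eq_of_ne (hcon j)]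
    simp
  have h2 : (Pi.mulSingle i s : Fin t → S) = 1 := by simpa using h1
  exact hs (by simpa using h2)

theorem isWr_unique {S : Type} [Group S] [Nontrivial S] {t : ℕ} {α : MulAut (Fin t → S)}
    {p p' : Fin t → Fin t} {β β' : Fin t → MulAut S} (h : IsWr α p β) (h' : IsWr α p' β') :
    p = p' ∧ β = β' := by
  have hp : p = p' := by
    ext1 j
    by_contra hne
    obtain ⟨s, hs⟩ := exists_ne (1 : S)
    have h1 := (h (Pi.mulSingle (p j) s) j).symm.trans (h' (Pi.mulSingle (p j) s) j)
    rw [Pi.mulSingle_eq_of_ne (Ne.symm hne)] at h1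
    simp at h1
    exact hs h1
  refine ⟨hp, ?_⟩
  subst hp
  ext j s
  simpa using (h (fun _ => s) j).symm.trans (h' (fun _ => s) j)

theorem isWr_mul {S : Type} [Group S] {t : ℕ} {α α' : MulAut (Fin t → S)}
    {p p' : Fin t → Fin t} {β β' : Fin t → MulAut S} (h' : IsWr α' p' β') (h : IsWr α p β) :
    IsWr (α' * α) (p ∘ p') (fun j => β' j * β (p' j)) := by
  intro x j
  rw [MulAut.mul_apply, h', h]
  rfl

theorem isWr_one {S : Type} [Group S] {t : ℕ} :
    IsWr (1 : MulAut (Fin t → S)) id (fun _ => 1) := fun _ _ => rfl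

/-- The tensor induced matrix. -/
def wrMat {S : Type} [Group S] {t d : ℕ} (A : MulAut S →* Matrix (Fin d) (Fin d) ℂ)
    (p : Fin t → Fin t) (β : Fin t → MulAut S) :
    Matrix (Fin t → Fin d) (Fin t → Fin d) ℂ :=
  fun a b => ∏ j, A (β j) (a j) (b (p j))

theorem wrMat_mul {S : Type} [Group S] {t d : ℕ} (A : MulAut S →* Matrix (Fin d) (Fin d) ℂ)
    (p p' : Fin t → Fin t) (hp' : Function.Bijective p') (β β' : Fin t → MulAut S) :
    wrMat A (p ∘ p') (fun j => β' j * β (p' j)) = wrMat A p' β' * wrMat A p β := by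
  ext a c
  rw [Matrix.mul_apply]
  simp only [wrMat, map_mul, Matrix.mul_apply, Function.comp]
  rw [Fintype.prod_sum]
  let q : Fin t ≃ Fin t := Equiv.ofBijective p' hp'
  rw [← (Equiv.arrowCongr q.symm (Equiv.refl (Fin d))).sum_comp]
  refine Finset.sum_congr rfl fun b _ => ?_
  rw [← q.prod_comp (fun k => A (β k) _ (c (p k))), Finset.prod_mul_distrib]
  simp [Equiv.arrowCongr, q]

theorem wrMat_one {S : Type} [Group S] {t d : ℕ} (A : MulAut S →* Matrix (Fin d) (Fin d) ℂ) :
    wrMat A id (fun _ : Fin t => 1) = 1 := by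
  ext a b
  simp only [wrMat, map_one, id, Matrix.one_apply]
  by_cases h : a = b
  · simp [h]
  · rw [if_neg h]
    obtain ⟨j, hj⟩ := Function.ne_iff.1 h
    exact Finset.prod_eq_zero (Finset.mem_univ j) (if_neg hj)

theorem wrMat_trace {S : Type} [Group S] {t d : ℕ} (A : MulAut S →* Matrix (Fin d) (Fin d) ℂ)
    (β : Fin t → MulAut S) : (wrMat A id β).trace = ∏ j, (A (β j)).trace := by
  simp only [Matrix.trace, wrMat, Matrix.diag, id]
  rw [Fintype.prod_sum]

theorem exists_wrHom {S : Type} [Group S] [Fintype S] [IsSimpleGroup S]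
    (hna : ∃ a b : S, a * b ≠ b * a) (t d : ℕ) (A : MulAut S →* Matrix (Fin d) (Fin d) ℂ) :
    ∃ Φ : MulAut (Fin t → S) →* Matrix (Fin t → Fin d) (Fin t → Fin d) ℂ,
      ∀ α p β, IsWr α p β → Φ α = wrMat A p β := by
  choose p β h using fun α : MulAut (Fin t → S) => isWr_exists hna α
  have key : ∀ α p' β', IsWr α p' β' → wrMat A (p α) (β α) = wrMat A p' β' := by
    intro α p' β' h'
    obtain ⟨h1, h2⟩ := isWr_unique (h α) h'
    rw [h1, h2]
  refine ⟨{ toFun := fun α => wrMat A (p α) (β α), map_one' := ?_, map_mul' := ?_ }, key⟩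
  · rw [key _ _ _ isWr_one, wrMat_one]
  · intro α' α
    rw [key _ _ _ (isWr_mul (h α') (h α)), wrMat_mul _ _ _ (isWr_bij (h α'))]

theorem simple_of_res_s6 {G H : Type} [Group G] [Fintype G] [Group H] [Fintype H]
    (f : H →* G) (V : FDRep ℂ G) (h : Simple ((Action.res (FGModuleCat ℂ) f).obj V)) :
    Simple V := by
  rw [FDRep.simple_iff_end_is_rank_one] at h ⊢
  let L : (V ⟶ V) →ₗ[ℂ] ((Action.res (FGModuleCat ℂ) f).obj V ⟶
      (Action.res (FGModuleCat ℂ) f).obj V) :=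
    { toFun := fun g => (Action.res (FGModuleCat ℂ) f).map g
      map_add' := fun _ _ => rfl
      map_smul' := fun _ _ => rfl }
  have hL : Function.Injective L := by
    intro a b hab
    apply Action.Hom.ext
    have h2 : (L a).hom = (L b).hom := by rw [hab]
    exact h2
  have hle := LinearMap.finrank_le_finrank_of_injective hL
  have hpos : 0 < Module.finrank ℂ (V ⟶ V) := by
    rw [Module.finrank_pos_iff_exists_ne_zero]
    refine ⟨𝟙 V, fun h0 => ?_⟩
    have hz : ∀ g : (Action.res (FGModuleCat ℂ) f).obj V ⟶
      (Action.res (FGModuleCat ℂ) f).obj V, g = 0 := by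
      intro g
      have h1 : 𝟙 ((Action.res (FGModuleCat ℂ) f).obj V) = 0 := congrArg L h0
      rw [← Category.comp_id g, h1, Limits.comp_zero]
    have : Module.finrank ℂ ((Action.res (FGModuleCat ℂ) f).obj V ⟶
      (Action.res (FGModuleCat ℂ) f).obj V) = 0 := by
      have : Subsingleton ((Action.res (FGModuleCat ℂ) f).obj V ⟶
        (Action.res (FGModuleCat ℂ) f).obj V) := ⟨fun a b => (hz a).trans (hz b).symm⟩
      exact Module.finrank_zero_of_subsingleton
    omega
  omega

/-- If a minimal normal subgroup `N` of `G` is a direct product of `t` copies of a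
non-abelian simple group `S` and `σ ∈ Irr(S)` extends to `Aut(S)`, then
`σ × ⋯ × σ` extends to `G`. -/
theorem diag_char_extends (G : Type) [Group G] [Fintype G]
    (N : Subgroup G) [N.Normal] (hN1 : N ≠ ⊥)
    (hmin : ∀ K : Subgroup G, K.Normal → K ≤ N → K = ⊥ ∨ K = N)
    (S : Type) [Group S] [Fintype S] [IsSimpleGroup S] (hna : ∃ a b : S, a * b ≠ b * a)
    (t : ℕ) (e : N ≃* (Fin t → S))
    (σ : S → ℂ) (hσ : IsIrrChar σ)
    (hextAut : ∃ σt : MulAut S → ℂ, IsIrrChar σt ∧ ∀ s : S, σt (MulAut.conj s) = σ s) :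
    ∃ χ : G → ℂ, IsIrrChar χ ∧ ∀ n : N, χ n = ∏ i, σ (e n i) := by
  obtain ⟨σt, ⟨V, -, rfl⟩, hσt⟩ := hextAut
  let b := Module.finBasis ℂ V
  let A : MulAut S →* Matrix (Fin (Module.finrank ℂ V)) (Fin (Module.finrank ℂ V)) ℂ :=
    (LinearMap.toMatrixAlgEquiv b).toRingEquiv.toRingHom.toMonoidHom.comp V.ρ
  have hA : ∀ s, (A (MulAut.conj s)).trace = σ s := by
    intro s
    rw [← hσt s]
    exact (LinearMap.trace_eq_matrix_trace ℂ b _).symm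
  obtain ⟨Φ, hΦ⟩ := exists_wrHom hna t _ A
  let ψ : G →* MulAut (Fin t → S) := (MulAut.congr e).toMonoidHom.comp MulAut.conjNormal
  have hψ : ∀ n : N, IsWr (ψ n) id (fun j => MulAut.conj (e n j)) := by
    intro n x j
    have : (MulAut.conjNormal (n : G) : MulAut N) = MulAut.conj n := MulAut.conjNormal_val
    change e ((MulAut.conjNormal (n : G) : MulAut N) (e.symm x)) j = _
    rw [this]
    simp
  let ρ : Representation ℂ G ((Fin t → Fin (Module.finrank ℂ V)) → ℂ) :=
    (Matrix.toLinAlgEquiv' (R := ℂ)).toRingEquiv.toRingHom.toMonoidHom.comp (Φ.comp ψ)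
  let W : FDRep ℂ G := FDRep.of ρ
  have hW : ∀ n : N, W.character n = ∏ i, σ (e n i) := by
    intro n
    have h1 : W.character n = (Φ (ψ n)).trace := Matrix.trace_toLin'_eq _
    rw [h1, hΦ _ _ _ (hψ n), wrMat_trace]
    simp only [hA]
  refine ⟨W.character, ⟨W, ?_, rfl⟩, hW⟩
  apply simple_of_res_s6 N.subtype
  rw [FDRep.simple_iff_char_is_norm_one]
  have hres : ∀ n : N, FDRep.character ((Action.res (FGModuleCat ℂ) N.subtype).obj W) n
      = ∏ i, σ (e n i) := hW
  obtain ⟨U, hU, rfl⟩ := hσ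
  rw [FDRep.simple_iff_char_is_norm_one] at hU
  simp only [hres, map_inv, Pi.inv_apply, ← Finset.prod_mul_distrib]
  refine (e.toEquiv.sum_comp
    (fun x : Fin t → S => ∏ i, U.character (x i) * U.character (x i)⁻¹)).trans ?_
  rw [← Fintype.prod_sum (fun (_ : Fin t) s => U.character s * U.character s⁻¹)]
  rw [hU, Nat.card_congr e.toEquiv]
  simp
end
end

section
/- Let G be a finite group with normal subgroups M ≅ SL(2,5) and C = C_G(M) such that G = MC and T = M ∩ C = Z(M) ≅ C₂. If the unique non-trivial character λ of T extends to a linear character of C, then every ψ ∈ Irr(M) lying over λ with ψ(1) ∈ {2,4} has all its extensions to characters of G over λ being primitive, and in particular G has at least 2·n₁(G/M) primitive irreducible characters of degree 2 and at least n₁(G/M) primitive irreducible characters of degree 4 not containing T in their kernel. -/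
open CategoryTheory BigOperators
open scoped Classical

noncomputable section

/-! ### The Weil representation of `SL(2,5)` in degree two -/

/-- Elements of `ℤ[ζ₅]` in coordinates. -/
abbrev Zf := ℤ × ℤ × ℤ × ℤ

def zadd (p q : Zf) : Zf :=
  (p.1 + q.1, p.2.1 + q.2.1, p.2.2.1 + q.2.2.1, p.2.2.2 + q.2.2.2)

def zsc (n : ℤ) (p : Zf) : Zf := (n * p.1, n * p.2.1, n * p.2.2.1, n * p.2.2.2)

def zmul (p q : Zf) : Zf :=
  let c4 := p.2.1 * q.2.2.2 + p.2.2.1 * q.2.2.1 + p.2.2.2 * q.2.1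
  let c5 := p.2.2.1 * q.2.2.2 + p.2.2.2 * q.2.2.1
  let c6 := p.2.2.2 * q.2.2.2
  (p.1 * q.1 - c4 + c5,
   p.1 * q.2.1 + p.2.1 * q.1 - c4 + c6,
   p.1 * q.2.2.1 + p.2.1 * q.2.1 + p.2.2.1 * q.1 - c4,
   p.1 * q.2.2.2 + p.2.1 * q.2.2.1 + p.2.2.1 * q.2.1 + p.2.2.2 * q.1 - c4)

/-- Powers of `ζ`. -/
def zpw (k : ZMod 5) : Zf :=
  if k = 0 then (1, 0, 0, 0) else if k = 1 then (0, 1, 0, 0) else if k = 2 then (0, 0, 1, 0)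
  else if k = 3 then (0, 0, 0, 1) else (-1, -1, -1, -1)

/-- Legendre symbol modulo `5`. -/
def leg (a : ZMod 5) : ℤ := if a * a = 1 then 1 else -1

/-- Index of the basis of odd functions. -/
def ix (i : Fin 2) : ZMod 5 := if i = 0 then 1 else 2

/-- Five times the matrix entries of the odd part of the Weil representation. -/
def ent (a b c d : ZMod 5) (i j : Fin 2) : Zf :=
  if c = 0 then
    zsc (5 * leg a * ((if ix j = a * ix i then 1 else 0) - (if ix j = - (a * ix i) then 1 else 0)))
      (zpw (a * b * (ix i * ix i)))
  else
    zsc (leg c) (zmul (1, 0, 2, 2)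
      (zadd (zpw ((a * (ix i * ix i) + d * (ix j * ix j) + 2 * ix i * ix j) * (c * c * c)))
        (zsc (-1) (zpw ((a * (ix i * ix i) + d * (ix j * ix j) - 2 * ix i * ix j) * (c * c * c))))))

theorem ent_u : ∀ a b c d : ZMod 5, a * d - b * c = 1 → ∀ i j : Fin 2,
    zadd (zmul (ent 1 1 0 1 i 0) (ent a b c d 0 j)) (zmul (ent 1 1 0 1 i 1) (ent a b c d 1 j)) =
      zsc 5 (ent (a + c) (b + d) c d i j) := by
  decide +kernel

theorem ent_v : ∀ a b c d : ZMod 5, a * d - b * c = 1 → ∀ i j : Fin 2,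
    zadd (zmul (ent 1 0 1 1 i 0) (ent a b c d 0 j)) (zmul (ent 1 0 1 1 i 1) (ent a b c d 1 j)) =
      zsc 5 (ent a b (a + c) (b + d) i j) := by
  decide +kernel

/-- Evaluation of coordinates at a root of unity. -/
def ev (z : ℂ) (p : Zf) : ℂ := p.1 + p.2.1 * z + p.2.2.1 * z ^ 2 + p.2.2.2 * z ^ 3

theorem ev_add (z : ℂ) (p q : Zf) : ev z (zadd p q) = ev z p + ev z q := by
  simp only [ev, zadd]; push_cast; ring

theorem ev_sc (z : ℂ) (n : ℤ) (p : Zf) : ev z (zsc n p) = n * ev z p := by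
  simp only [ev, zsc]; push_cast; ring

theorem ev_mul (z : ℂ) (hz : 1 + z + z ^ 2 + z ^ 3 + z ^ 4 = 0) (p q : Zf) :
    ev z (zmul p q) = ev z p * ev z q := by
  obtain ⟨a, b, c, d⟩ := p
  obtain ⟨a', b', c', d'⟩ := q
  simp only [ev, zmul]; push_cast
  have h4 : z ^ 4 = - (1 + z + z ^ 2 + z ^ 3) := by linear_combination hz
  have h5 : z ^ 5 = 1 := by linear_combination (z - 1) * hz
  have h6 : z ^ 6 = z := by linear_combination z * (z - 1) * hz
  ring_nf
  rw [h4, h5, h6]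
  ring

abbrev SLf := Matrix.SpecialLinearGroup (Fin 2) (ZMod 5)

def mkSL (a b c d : ZMod 5) (h : a * d - b * c = 1) : SLf :=
  ⟨!![a, b; c, d], by rw [Matrix.det_fin_two_of]; exact h⟩

def uu : SLf := mkSL 1 1 0 1 (by decide)
def vv : SLf := mkSL 1 0 1 1 (by decide)
def nn : SLf := mkSL (-1) 0 0 (-1) (by decide)

theorem sl_cases (g : SLf) : ∃ a b c d h, g = mkSL a b c d h := by
  refine ⟨g 0 0, g 0 1, g 1 0, g 1 1, ?_, ?_⟩
  · have := g.2
    rwa [Matrix.det_fin_two] at this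
  · apply Subtype.ext
    exact Matrix.eta_fin_two _

theorem mkSL_congr {a b c d a' b' c' d' : ZMod 5} {h h'} (h1 : a = a') (h2 : b = b') (h3 : c = c')
    (h4 : d = d') : mkSL a b c d h = mkSL a' b' c' d' h' := by
  subst h1 h2 h3 h4; rfl

theorem mkSL_mul (a b c d a' b' c' d' : ZMod 5) (h h' h'') :
    mkSL a b c d h * mkSL a' b' c' d' h' =
      mkSL (a * a' + b * c') (a * b' + b * d') (c * a' + d * c') (c * b' + d * d') h'' := by
  apply Subtype.ext
  change !![a, b; c, d] * !![a', b'; c', d'] = _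
  rw [Matrix.mul_fin_two]
  rfl

theorem uu_mul (a b c d h) : uu * mkSL a b c d h = mkSL (a + c) (b + d) c d
    (by linear_combination h) := by
  rw [uu, mkSL_mul (h'' := by linear_combination h)]
  exact mkSL_congr (by ring) (by ring) (by ring) (by ring)

theorem vv_mul (a b c d h) : vv * mkSL a b c d h = mkSL a b (a + c) (b + d)
    (by linear_combination h) := by
  rw [vv, mkSL_mul (h'' := by linear_combination h)]
  exact mkSL_congr (by ring) (by ring) (by ring) (by ring)

theorem uu_pow (n : ℕ) : uu ^ n = mkSL 1 n 0 1 (by ring) := by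
  induction n with
  | zero => apply Subtype.ext; simp [mkSL, Matrix.one_fin_two]
  | succ n ih => rw [pow_succ', ih, uu_mul]; exact mkSL_congr (by ring) (by push_cast; ring) rfl rfl

theorem vv_pow (n : ℕ) : vv ^ n = mkSL 1 0 n 1 (by ring) := by
  induction n with
  | zero => apply Subtype.ext; simp [mkSL, Matrix.one_fin_two]
  | succ n ih => rw [pow_succ', ih, vv_mul]; exact mkSL_congr rfl rfl (by push_cast; ring) (by ring)

theorem uu_pow_five : uu ^ 5 = 1 := by
  rw [uu_pow]; apply Subtype.ext; rw [mkSL]; decide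

theorem vv_pow_five : vv ^ 5 = 1 := by
  rw [vv_pow]; apply Subtype.ext; rw [mkSL]; decide

theorem gen_table : ∀ a b c d : ZMod 5, a * d - b * c = 1 → c ≠ 0 →
    a = 1 + ((a - 1) * (c * c * c)) * c ∧ b = (1 + ((a - 1) * (c * c * c)) * c) *
      ((d - 1) * (c * c * c)) + (a - 1) * (c * c * c) ∧ d = c * ((d - 1) * (c * c * c)) + 1 := by
  decide +kernel

/-- The transvections generate `SL(2,5)` (as a monoid). -/
theorem sl_gen (S : Submonoid SLf) (hu : uu ∈ S) (hv : vv ∈ S) (g : SLf) : g ∈ S := by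
  have key : ∀ a b c d h, c ≠ 0 → mkSL a b c d h ∈ S := by
    intro a b c d h hc
    have e : mkSL a b c d h = uu ^ ((a - 1) * (c * c * c)).val * vv ^ c.val *
        uu ^ ((d - 1) * (c * c * c)).val := by
      obtain ⟨h1, h2, h3⟩ := gen_table a b c d h hc
      have e1 : uu ^ ((a - 1) * (c * c * c)).val = mkSL 1 ((a - 1) * (c * c * c)) 0 1 (by ring) := by
        rw [uu_pow]; exact mkSL_congr rfl (by simp) rfl rfl
      have e2 : uu ^ ((d - 1) * (c * c * c)).val = mkSL 1 ((d - 1) * (c * c * c)) 0 1 (by ring) := by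
        rw [uu_pow]; exact mkSL_congr rfl (by simp) rfl rfl
      have e3 : vv ^ c.val = mkSL 1 0 c 1 (by ring) := by
        rw [vv_pow]; exact mkSL_congr rfl rfl (by simp) rfl
      rw [e1, e2, e3, mkSL_mul (h'' := by ring), mkSL_mul (h'' := by ring)]
      apply mkSL_congr
      · linear_combination h1
      · linear_combination h2
      · ring
      · linear_combination h3
    rw [e]
    exact S.mul_mem (S.mul_mem (S.pow_mem hu _) (S.pow_mem hv _)) (S.pow_mem hu _)
  obtain ⟨a, b, c, d, h, rfl⟩ := sl_cases g
  by_cases hc : c = 0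
  · have e : mkSL a b c d h = vv ^ 4 * (vv * mkSL a b c d h) := by
      rw [← mul_assoc, ← pow_succ, vv_pow_five, one_mul]
    rw [e, vv_mul]
    refine S.mul_mem (S.pow_mem hv _) (key _ _ _ _ _ ?_)
    subst hc
    rintro h0
    simp only [add_zero] at h0
    subst h0
    simp only [zero_mul, mul_zero, sub_zero] at h
    exact absurd h (by decide)
  · exact key _ _ _ _ _ hc

theorem center_table : ∀ a b c d : ZMod 5, a * d - b * c = 1 →
    a + c = a → b + d = a + b → a = a + b → d + c = d → c = 0 ∧ b = 0 ∧ a = d ∧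
      (a = 1 ∨ a = -1) := by
  decide +kernel

theorem mul_uu (a b c d h) : mkSL a b c d h * uu = mkSL a (a + b) c (c + d)
    (by linear_combination h) := by
  rw [uu, mkSL_mul (h'' := by linear_combination h)]
  exact mkSL_congr (by ring) (by ring) (by ring) (by ring)

theorem mul_vv (a b c d h) : mkSL a b c d h * vv = mkSL (a + b) b (c + d) d
    (by linear_combination h) := by
  rw [vv, mkSL_mul (h'' := by linear_combination h)]
  exact mkSL_congr (by ring) (by ring) (by ring) (by ring)

theorem mkSL_inj {a b c d a' b' c' d' : ZMod 5} {h h'}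
    (e : mkSL a b c d h = mkSL a' b' c' d' h') : a = a' ∧ b = b' ∧ c = c' ∧ d = d' := by
  have := congrArg Subtype.val e
  simp only [mkSL] at this
  refine ⟨?_, ?_, ?_, ?_⟩
  · simpa using congrFun (congrFun this 0) 0
  · simpa using congrFun (congrFun this 0) 1
  · simpa using congrFun (congrFun this 1) 0
  · simpa using congrFun (congrFun this 1) 1

theorem sl_center (g : SLf) (h1 : g ≠ 1) (hu : uu * g = g * uu) (hv : vv * g = g * vv) :
    g = nn := by
  obtain ⟨a, b, c, d, h, rfl⟩ := sl_cases g
  rw [uu_mul, mul_uu] at hu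
  rw [vv_mul, mul_vv] at hv
  have e1 := mkSL_inj hu
  have e2 := mkSL_inj hv
  obtain ⟨q1, q2, q3, q4⟩ := center_table a b c d h e1.1 e1.2.1 e2.1
    (by rw [add_comm]; exact e1.2.2.2.symm)
  subst q1 q2 q3
  rcases q4 with rfl | rfl
  · exact absurd (Subtype.ext (by simp [mkSL, Matrix.one_fin_two])) h1
  · rfl

/-- The matrix of the Weil representation. -/
def weilM (z : ℂ) (g : SLf) : Matrix (Fin 2) (Fin 2) ℂ :=
  Matrix.of fun i j => (1 / 5 : ℂ) * ev z (ent (g 0 0) (g 0 1) (g 1 0) (g 1 1) i j)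

theorem weilM_mk (z : ℂ) (a b c d h) (i j) :
    weilM z (mkSL a b c d h) i j = (1 / 5 : ℂ) * ev z (ent a b c d i j) := by
  simp [weilM, mkSL]

theorem weilM_u (z : ℂ) (hz : 1 + z + z ^ 2 + z ^ 3 + z ^ 4 = 0) (g : SLf) :
    weilM z (uu * g) = weilM z uu * weilM z g := by
  obtain ⟨a, b, c, d, h, rfl⟩ := sl_cases g
  rw [uu_mul]
  ext i j
  rw [Matrix.mul_apply, Fin.sum_univ_two, uu]
  simp only [weilM_mk]
  have := congrArg (ev z) (ent_u a b c d h i j)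
  rw [ev_add, ev_mul z hz, ev_mul z hz, ev_sc] at this
  push_cast at this
  linear_combination (-1 / 25) * this

theorem weilM_v (z : ℂ) (hz : 1 + z + z ^ 2 + z ^ 3 + z ^ 4 = 0) (g : SLf) :
    weilM z (vv * g) = weilM z vv * weilM z g := by
  obtain ⟨a, b, c, d, h, rfl⟩ := sl_cases g
  rw [vv_mul]
  ext i j
  rw [Matrix.mul_apply, Fin.sum_univ_two, vv]
  simp only [weilM_mk]
  have := congrArg (ev z) (ent_v a b c d h i j)
  rw [ev_add, ev_mul z hz, ev_mul z hz, ev_sc] at this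
  push_cast at this
  linear_combination (-1 / 25) * this

theorem ent_one : ent 1 0 0 1 0 0 = (5, 0, 0, 0) ∧ ent 1 0 0 1 0 1 = (0, 0, 0, 0) ∧
    ent 1 0 0 1 1 0 = (0, 0, 0, 0) ∧ ent 1 0 0 1 1 1 = (5, 0, 0, 0) := by decide +kernel

theorem ent_neg : ent (-1) 0 0 (-1) 0 0 = (-5, 0, 0, 0) ∧ ent (-1) 0 0 (-1) 0 1 = (0, 0, 0, 0) ∧
    ent (-1) 0 0 (-1) 1 0 = (0, 0, 0, 0) ∧ ent (-1) 0 0 (-1) 1 1 = (-5, 0, 0, 0) := by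
  decide +kernel

theorem ent_uu : ent 1 1 0 1 0 0 = (0, 5, 0, 0) ∧ ent 1 1 0 1 0 1 = (0, 0, 0, 0) ∧
    ent 1 1 0 1 1 0 = (0, 0, 0, 0) ∧ ent 1 1 0 1 1 1 = (-5, -5, -5, -5) := by decide +kernel

theorem mkSL_one : (1 : SLf) = mkSL 1 0 0 1 (by decide) := by
  apply Subtype.ext; simp [mkSL, Matrix.one_fin_two]

theorem weilM_one (z : ℂ) : weilM z 1 = 1 := by
  obtain ⟨h1, h2, h3, h4⟩ := ent_one
  rw [mkSL_one]
  ext i j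
  rw [weilM_mk]
  fin_cases i <;> fin_cases j <;> simp [h1, h2, h3, h4, ev]

theorem weilM_nn (z : ℂ) : weilM z nn = -1 := by
  obtain ⟨h1, h2, h3, h4⟩ := ent_neg
  rw [nn]
  ext i j
  rw [weilM_mk]
  fin_cases i <;> fin_cases j <;> simp [h1, h2, h3, h4, ev]

theorem weilM_uu (z : ℂ) (hz : 1 + z + z ^ 2 + z ^ 3 + z ^ 4 = 0) :
    weilM z uu = Matrix.diagonal ![z, z ^ 4] := by
  obtain ⟨h1, h2, h3, h4⟩ := ent_uu
  rw [uu]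
  ext i j
  rw [weilM_mk]
  fin_cases i <;> fin_cases j <;> simp [h1, h2, h3, h4, ev]
  linear_combination -hz

/-- The Weil representation in degree two. -/
def weil (z : ℂ) (hz : 1 + z + z ^ 2 + z ^ 3 + z ^ 4 = 0) :
    SLf →* Matrix (Fin 2) (Fin 2) ℂ where
  toFun := weilM z
  map_one' := weilM_one z
  map_mul' := by
    let S : Submonoid SLf :=
      { carrier := {g | ∀ h, weilM z (g * h) = weilM z g * weilM z h}
        one_mem' := by intro h; rw [one_mul, weilM_one, one_mul]
        mul_mem' := by
          intro a b ha hb h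
          rw [mul_assoc, ha, hb, ha b, mul_assoc] }
    exact fun g => sl_gen S (weilM_u z hz) (weilM_v z hz) g

theorem ent_vv : zmul (ent 1 0 1 1 0 0) (-25, -25, -50, -25) = (125, 0, 0, 0) ∧
    zmul (ent 1 0 1 1 0 1) (0, 0, -25, 25) = (125, 0, 0, 0) := by
  decide +kernel

theorem weil_vv (z : ℂ) (hz : 1 + z + z ^ 2 + z ^ 3 + z ^ 4 = 0) (j : Fin 2) :
    weil z hz vv 0 j ≠ 0 := by
  change weilM z vv 0 j ≠ 0
  rw [vv, weilM_mk]
  have h1 := congrArg (ev z) ent_vv.1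
  have h2 := congrArg (ev z) ent_vv.2
  rw [ev_mul z hz] at h1 h2
  fin_cases j
  · intro h0
    replace h0 : (1 / 5 : ℂ) * ev z (ent 1 0 1 1 0 0) = 0 := h0
    have h0' : ev z (ent 1 0 1 1 0 0) = 0 := by linear_combination 5 * h0
    rw [h0', zero_mul] at h1
    norm_num [ev] at h1
  · intro h0
    replace h0 : (1 / 5 : ℂ) * ev z (ent 1 0 1 1 0 1) = 0 := h0
    have h0' : ev z (ent 1 0 1 1 0 1) = 0 := by linear_combination 5 * h0
    rw [h0', zero_mul] at h2
    norm_num [ev] at h2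

/-- The symmetric cube of a matrix of size two. -/
def cubeM (A : Matrix (Fin 2) (Fin 2) ℂ) : Matrix (Fin 4) (Fin 4) ℂ :=
  let p := A 0 0
  let q := A 0 1
  let r := A 1 0
  let s := A 1 1
  !![p ^ 3, p ^ 2 * q, p * q ^ 2, q ^ 3;
     3 * p ^ 2 * r, p ^ 2 * s + 2 * p * r * q, q ^ 2 * r + 2 * p * q * s, 3 * q ^ 2 * s;
     3 * p * r ^ 2, r ^ 2 * q + 2 * p * r * s, s ^ 2 * p + 2 * q * s * r, 3 * q * s ^ 2;
     r ^ 3, r ^ 2 * s, r * s ^ 2, s ^ 3]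

set_option maxHeartbeats 1000000 in
/-- The symmetric cube is multiplicative. -/
def cube : Matrix (Fin 2) (Fin 2) ℂ →* Matrix (Fin 4) (Fin 4) ℂ where
  toFun := cubeM
  map_one' := by
    ext i j
    fin_cases i <;> fin_cases j <;> simp [cubeM]
  map_mul' A B := by
    ext i j
    fin_cases i <;> fin_cases j <;>
      simp [cubeM, Matrix.mul_apply, Fin.sum_univ_four, Fin.sum_univ_two] <;> ring

theorem cube_neg : cube (-1) = -1 := by
  change cubeM (-1) = -1
  ext i j
  fin_cases i <;> fin_cases j <;> simp [cubeM] <;> norm_num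

theorem cube_diag (z : ℂ) (hz : 1 + z + z ^ 2 + z ^ 3 + z ^ 4 = 0) :
    cube (Matrix.diagonal ![z, z ^ 4]) = Matrix.diagonal ![z ^ 3, z, z ^ 4, z ^ 2] := by
  change cubeM _ = _
  have h5 : z ^ 5 = 1 := by linear_combination (z - 1) * hz
  have h6 : z ^ 2 * z ^ 4 = z := by linear_combination z * h5
  have h9 : (z ^ 4) ^ 2 * z = z ^ 4 := by linear_combination z ^ 4 * h5
  have h12 : (z ^ 4) ^ 3 = z ^ 2 := by linear_combination (z ^ 7 + z ^ 2) * h5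
  ext i j
  fin_cases i <;> fin_cases j <;> simp [cubeM, h6, h9, h12]

theorem cube_row (A : Matrix (Fin 2) (Fin 2) ℂ) (h : ∀ j, A 0 j ≠ 0) (j : Fin 4) :
    cube A 0 j ≠ 0 := by
  change cubeM A 0 j ≠ 0
  have h0 := h 0
  have h1 := h 1
  fin_cases j <;> simp [cubeM, h0, h1]

/-- Sufficient criterion for the irreducibility of a matrix representation. -/
theorem irr_of_matrix {K : Type} [Group K] [Fintype K] {n : ℕ}
    (ρ : K →* Matrix (Fin (n + 1)) (Fin (n + 1)) ℂ) (d : Fin (n + 1) → ℂ)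
    (hd : Function.Injective d) (u w : K) (hu : ρ u = Matrix.diagonal d)
    (hw : ∀ j, ρ w 0 j ≠ 0) : IsIrrChar (fun g => (ρ g).trace) := by
  let σ : Representation ℂ K (Fin (n + 1) → ℂ) :=
    (Matrix.toLinAlgEquiv' : Matrix (Fin (n + 1)) (Fin (n + 1)) ℂ ≃ₐ[ℂ] _).toMonoidHom.comp ρ
  have hσ : ∀ g, σ g = Matrix.toLin' (ρ g) := fun g => rfl
  refine ⟨FDRep.of σ, ?_, ?_⟩
  · rw [FDRep.simple_iff_end_is_rank_one,
      ← (Representation.linHom.invariantsEquivFDRepHom (FDRep.of σ) (FDRep.of σ)).finrank_eq]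
    change Module.finrank ℂ (Representation.linHom σ σ).invariants = 1
    have hid : (LinearMap.id : (Fin (n + 1) → ℂ) →ₗ[ℂ] (Fin (n + 1) → ℂ)) ∈
        (Representation.linHom σ σ).invariants := by
      intro g
      rw [Representation.linHom_apply, LinearMap.id_comp]
      change σ g * σ g⁻¹ = 1
      rw [← map_mul, mul_inv_cancel, map_one]
    refine finrank_eq_one (⟨LinearMap.id, hid⟩ : (Representation.linHom σ σ).invariants) ?_ ?_
    · intro h
      have h' := congrArg Subtype.val h
      have h'' := congrFun (LinearMap.congr_fun h' (fun _ => 1)) 0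
      exact one_ne_zero h''
    · rintro ⟨f, hf⟩
      have hcomm : ∀ g, LinearMap.toMatrix' f * ρ g = ρ g * LinearMap.toMatrix' f := by
        intro g
        have h1 := hf g
        rw [Representation.linHom_apply] at h1
        have h2 : σ g * f * σ g⁻¹ = f := h1
        have h3 : f * σ g = σ g * f := by
          conv_lhs => rw [← h2]
          rw [mul_assoc, mul_assoc, ← map_mul, inv_mul_cancel, map_one, mul_one]
        have h4 := congrArg LinearMap.toMatrix' h3
        rwa [LinearMap.toMatrix'_mul, LinearMap.toMatrix'_mul, hσ, LinearMap.toMatrix'_toLin'] at h4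
      set X := LinearMap.toMatrix' f with hX
      have hdiag : ∀ i j, i ≠ j → X i j = 0 := by
        intro i j hij
        have h1 := congrFun (congrFun (hcomm u) i) j
        rw [hu, Matrix.mul_diagonal, Matrix.diagonal_mul] at h1
        have h2 : X i j * (d j - d i) = 0 := by linear_combination h1
        rcases mul_eq_zero.mp h2 with h | h
        · exact h
        · exact absurd (hd (sub_eq_zero.mp h)).symm hij
      have hX' : X = Matrix.diagonal (fun i => X i i) := by
        ext i j
        by_cases h : i = j
        · subst h; simp
        · rw [hdiag i j h, Matrix.diagonal_apply_ne _ h]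
      have hsc : ∀ j, X j j = X 0 0 := by
        intro j
        have h1 := congrFun (congrFun (hcomm w) 0) j
        rw [hX', Matrix.mul_diagonal, Matrix.diagonal_mul] at h1
        have h2 : ρ w 0 j * (X j j - X 0 0) = 0 := by linear_combination -h1
        rcases mul_eq_zero.mp h2 with h | h
        · exact absurd h (hw j)
        · exact sub_eq_zero.mp h
      refine ⟨X 0 0, Subtype.ext ?_⟩
      change X 0 0 • LinearMap.id = f
      apply LinearMap.toMatrix'.injective
      rw [map_smul, LinearMap.toMatrix'_id, ← hX, hX']
      ext i j
      by_cases h : i = j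
      · subst h; simp [hsc i]
      · simp [h]
  · funext g
    change _ = LinearMap.trace ℂ _ (Matrix.toLin' (ρ g))
    rw [Matrix.trace_toLin'_eq]

/-- The two irreducibility criteria for the degrees two and four. -/
theorem root_inj2 (z : ℂ) (hz : IsPrimitiveRoot z 5) :
    Function.Injective ![z, z ^ 4] := by
  have h : z ≠ z ^ 4 := fun h => absurd
    (hz.pow_inj (i := 1) (j := 4) (by norm_num) (by norm_num) (by simpa using h)) (by norm_num)
  intro i j hij
  fin_cases i <;> fin_cases j <;> simp_all

theorem root_inj4 (z : ℂ) (hz : IsPrimitiveRoot z 5) :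
    Function.Injective ![z ^ 3, z, z ^ 4, z ^ 2] := by
  have e : ![z ^ 3, z, z ^ 4, z ^ 2] = fun i => z ^ ((![3, 1, 4, 2] : Fin 4 → ℕ) i) := by
    funext i; fin_cases i <;> simp
  rw [e]
  intro i j hij
  have := hz.pow_inj (by fin_cases i <;> simp) (by fin_cases j <;> simp) hij
  revert this
  revert i j
  intro i j _ h
  fin_cases i <;> fin_cases j <;> simp_all
theorem mem_of_pow_five {G : Type} [Group G] [Fintype G] (H : Subgroup G) (h4 : H.index ≤ 4)
    (x : G) (hx : x ^ 5 = 1) : x ∈ H := by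
  have h5 : (MulAction.toPermHom G (G ⧸ H) x) ^ 5 = 1 := by rw [← map_pow, hx, map_one]
  have hc : (MulAction.toPermHom G (G ⧸ H) x) ^ (Nat.factorial 4) = 1 := by
    have h1 : Nat.card (Equiv.Perm (G ⧸ H)) ∣ Nat.factorial 4 := by
      rw [Nat.card_perm]
      exact Nat.factorial_dvd_factorial h4
    exact orderOf_dvd_iff_pow_eq_one.mp ((orderOf_dvd_natCard _).trans h1)
  have h1 : MulAction.toPermHom G (G ⧸ H) x = 1 := by
    have h25 : (MulAction.toPermHom G (G ⧸ H) x) ^ 25 = 1 := by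
      rw [show 25 = 5 * 5 from rfl, pow_mul, h5, one_pow]
    have h24 : (MulAction.toPermHom G (G ⧸ H) x) ^ 24 = 1 := hc
    rwa [pow_succ, h24, one_mul] at h25
  have h2 : x • ((1 : G) : G ⧸ H) = ((1 : G) : G ⧸ H) := by
    have := congrArg (fun f : Equiv.Perm (G ⧸ H) => f ((1 : G) : G ⧸ H)) h1
    exact this
  rw [MulAction.Quotient.smul_coe, smul_eq_mul, mul_one, eq_comm, QuotientGroup.eq] at h2
  simpa using h2

theorem prim_of_restrict (G : Type) [Group G] [Fintype G] (M : Subgroup G) [M.Normal]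
    (eM : M ≃* SLf) (C : Subgroup G) (hC : C = Subgroup.centralizer (M : Set G))
    (hG : M ⊔ C = ⊤) (ψ : M → ℂ) (hψ : IsIrrChar ψ) (hdeg : ψ 1 = 2 ∨ ψ 1 = 4)
    (χ : G → ℂ) (hχ : ∀ m : M, χ m = ψ m) : IsPrimitive χ := by
  rintro ⟨H, hH, η, ⟨W, hW, rfl⟩, hind⟩
  have hHpos : (Fintype.card H : ℂ) ≠ 0 := by exact_mod_cast Fintype.card_ne_zero
  have hcard : (Fintype.card G : ℂ) = H.index * Fintype.card H := by
    have := H.index_mul_card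
    rw [Nat.card_eq_fintype_card, Nat.card_eq_fintype_card] at this
    exact_mod_cast this.symm
  have hone : χ 1 = H.index * (Module.finrank ℂ W : ℂ) := by
    rw [hind]
    have : ∀ x : G, (if h : x⁻¹ * 1 * x ∈ H then W.character ⟨x⁻¹ * 1 * x, h⟩ else 0)
        = (Module.finrank ℂ W : ℂ) := by
      intro x
      have e : x⁻¹ * 1 * x = 1 := by group
      rw [dif_pos (by rw [e]; exact H.one_mem), ← FDRep.char_one]
      congr 1
      exact Subtype.ext e
    simp only [indChar, this, Finset.sum_const, Finset.card_univ, nsmul_eq_mul]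
    rw [hcard]
    field_simp
  have hidx : H.index ≤ 4 := by
    have h1 : χ 1 = ψ 1 := hχ 1
    have h2 : H.index * Module.finrank ℂ W = 2 ∨ H.index * Module.finrank ℂ W = 4 := by
      rw [← h1, hone] at hdeg
      exact_mod_cast hdeg
    rcases h2 with h | h
    · exact (Nat.le_of_dvd (by norm_num) (Dvd.intro _ h)).trans (by norm_num)
    · exact Nat.le_of_dvd (by norm_num) (Dvd.intro _ h)
  have hMH : M ≤ H := by
    intro m hm
    let S : Submonoid SLf := (H.toSubmonoid.comap M.subtype).comap eM.symm.toMonoidHom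
    have key : ∀ s : SLf, s ^ 5 = 1 → s ∈ S := by
      intro s hs
      apply mem_of_pow_five H hidx
      change ((eM.symm s : M) : G) ^ 5 = 1
      rw [← Subgroup.coe_pow, ← map_pow, hs, map_one, Subgroup.coe_one]
    have h1 : eM ⟨m, hm⟩ ∈ S := sl_gen S (key _ uu_pow_five) (key _ vv_pow_five) _
    have h2 : ((eM.symm (eM ⟨m, hm⟩) : M) : G) ∈ H := h1
    simpa using h2
  have hres : ∀ m : M, ψ m = H.index * W.character ⟨m, hMH m.2⟩ := by
    intro m
    rw [← hχ, hind]
    have : ∀ x : G, (if h : x⁻¹ * (m : G) * x ∈ H then W.character ⟨x⁻¹ * m * x, h⟩ else 0)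
        = W.character ⟨m, hMH m.2⟩ := by
      intro x
      have hx : x ∈ M ⊔ C := by rw [hG]; trivial
      obtain ⟨a, ha, c, hc, rfl⟩ := Subgroup.mem_sup_of_normal_left.mp hx
      rw [hC, Subgroup.mem_centralizer_iff] at hc
      have hconj : a⁻¹ * m * a ∈ M := M.mul_mem (M.mul_mem (M.inv_mem ha) m.2) ha
      have e : (a * c)⁻¹ * m * (a * c) = a⁻¹ * m * a := by
        have h1 := hc _ hconj
        calc (a * c)⁻¹ * m * (a * c) = c⁻¹ * ((a⁻¹ * m * a) * c) := by group
          _ = c⁻¹ * (c * (a⁻¹ * m * a)) := by rw [h1]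
          _ = _ := by group
      rw [dif_pos (by rw [e]; exact hMH hconj)]
      have h3 := W.char_conj ⟨m, hMH m.2⟩ (⟨a, hMH ha⟩⁻¹ : H)
      rw [← h3]
      congr 1
      apply Subtype.ext
      simpa using e
    simp only [indChar, this, Finset.sum_const, Finset.card_univ, nsmul_eq_mul]
    rw [hcard]
    field_simp
  obtain ⟨V, hV, rfl⟩ := hψ
  let U : FDRep ℂ M := FDRep.of (W.ρ.comp (Subgroup.inclusion hMH))
  have hU : ∀ m : M, U.character m = W.character ⟨m, hMH m.2⟩ := fun m => rfl
  have : Invertible (Nat.card M : ℂ) :=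
    invertibleOfNonzero (by exact_mod_cast Nat.card_pos.ne')
  have hn := FDRep.scalar_product_char_eq_finrank_equivariant U U
  have hm := (FDRep.simple_iff_char_is_norm_one V).mp hV
  have h1 : (H.index : ℂ) ^ 2 * (Module.finrank ℂ (U ⟶ U) : ℂ) = 1 := by
    have e : ∀ g : M, V.character g * V.character g⁻¹ =
        (H.index : ℂ) ^ 2 * (U.character g * U.character g⁻¹) := by
      intro g
      rw [hres, hres, hU, hU]
      ring
    rw [Finset.sum_congr rfl (fun g _ => e g), ← Finset.mul_sum] at hm
    rw [← hn]
    have h0 : (Nat.card M : ℂ) ≠ 0 := by exact_mod_cast Nat.card_pos.ne'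
    field_simp
    linear_combination hm
  have h2 : H.index ^ 2 * Module.finrank ℂ (U ⟶ U) = 1 := by exact_mod_cast h1
  have h3 : H.index = 1 := by
    have := Nat.eq_one_of_mul_eq_one_right h2
    simpa using this
  exact hH (Subgroup.index_eq_one.mp h3)

/-- Construction of the extensions. -/
theorem exists_ext (G : Type) [Group G] [Fintype G] (M : Subgroup G) [M.Normal]
    (eM : M ≃* SLf) (C T : Subgroup G) (hC : C = Subgroup.centralizer (M : Set G))
    (hG : M ⊔ C = ⊤) (hT : T = M ⊓ C) (hTcard : Nat.card T = 2)
    (lam : T →* ℂ) (hlamnt : lam ≠ 1) (μ : C →* ℂ)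
    (hμ : ∀ (t : G) (ht : t ∈ T), μ ⟨t, (Subgroup.mem_inf.mp (hT ▸ ht)).2⟩ = lam ⟨t, ht⟩)
    {n : ℕ} (σ : SLf →* Matrix (Fin (n + 1)) (Fin (n + 1)) ℂ) (hn : σ nn = -1)
    (d : Fin (n + 1) → ℂ) (hd : Function.Injective d) (hu : σ uu = Matrix.diagonal d)
    (hv : ∀ j, σ vv 0 j ≠ 0) (hdeg : n + 1 = 2 ∨ n + 1 = 4) :
    ∃ χ : ((G ⧸ M) →* ℂ) → G → ℂ, ∀ β,
      (IsIrrChar (χ β) ∧ IsPrimitive (χ β) ∧ χ β 1 = (n + 1 : ℕ) ∧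
        ∃ t : T, χ β (t : G) ≠ χ β 1) ∧
      (∀ m : M, χ β m = (σ (eM m)).trace) ∧
      (∀ c : C, χ β c = β (c : G) * μ c * (n + 1 : ℕ)) := by
  have hT1 : ∀ t (ht : t ∈ T), t ≠ 1 → ∃ hm : t ∈ M, eM ⟨t, hm⟩ = nn := by
    intro t ht h1
    have htM : t ∈ M := (Subgroup.mem_inf.mp (hT ▸ ht)).1
    have htC : t ∈ C := (Subgroup.mem_inf.mp (hT ▸ ht)).2
    refine ⟨htM, ?_⟩
    have hcomm : ∀ s : SLf, s * eM ⟨t, htM⟩ = eM ⟨t, htM⟩ * s := by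
      intro s
      apply eM.symm.injective
      rw [map_mul, map_mul, MulEquiv.symm_apply_apply]
      apply Subtype.ext
      rw [hC, Subgroup.mem_centralizer_iff] at htC
      exact htC _ (eM.symm s).2
    refine sl_center _ ?_ (hcomm _) (hcomm _)
    intro h
    apply h1
    have := eM.injective (h.trans (map_one eM).symm)
    exact congrArg Subtype.val this
  obtain ⟨t0, ht0⟩ : ∃ t : T, lam t ≠ 1 := by
    by_contra! h
    exact hlamnt (MonoidHom.ext h)
  have ht0ne : t0 ≠ 1 := by rintro rfl; exact ht0 (map_one lam)
  have htwo : ∀ t : T, t ≠ 1 → t = t0 := by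
    intro t ht
    obtain ⟨x, y, hxy, huniv⟩ := Nat.card_eq_two_iff.mp hTcard
    have hmem : ∀ s : T, s = x ∨ s = y := by
      intro s
      have : s ∈ ({x, y} : Set T) := by rw [huniv]; trivial
      simpa using this
    rcases hmem 1 with h | h <;> rcases hmem t with h' | h' <;> rcases hmem t0 with h'' | h'' <;>
      simp_all
  have hlam : lam t0 = -1 := by
    have h1 : lam t0 ^ 2 = 1 := by
      rw [← map_pow, ← hTcard, pow_card_eq_one', map_one]
    rcases mul_self_eq_one_iff.mp ((sq _).symm.trans h1) with h | h
    · exact absurd h ht0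
    · exact h
  have hwd : ∀ (m m' : M) (c c' : C), (m : G) * c = m' * c' →
      μ c • σ (eM m) = μ c' • σ (eM m') := by
    intro m m' c c' h
    have e1 : (m' : G)⁻¹ * m = c' * (c : G)⁻¹ := by
      rw [inv_mul_eq_iff_eq_mul, ← mul_assoc, ← h]; group
    have htT : (m' : G)⁻¹ * m ∈ T := by
      rw [hT]
      refine ⟨M.mul_mem (M.inv_mem m'.2) m.2, ?_⟩
      rw [e1]
      exact C.mul_mem c'.2 (C.inv_mem c.2)
    have em : m = m' * ⟨(m' : G)⁻¹ * m, M.mul_mem (M.inv_mem m'.2) m.2⟩ := by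
      apply Subtype.ext; simp
    have ec : c' = ⟨(m' : G)⁻¹ * m, (Subgroup.mem_inf.mp (hT ▸ htT)).2⟩ * c := by
      apply Subtype.ext; simp [e1]
    by_cases h1 : (m' : G)⁻¹ * m = 1
    · have a1 : m = m' := Subtype.ext (inv_mul_eq_one.mp h1).symm
      have a2 : c = c' := by rw [a1] at h; exact Subtype.ext (mul_left_cancel h)
      rw [a1, a2]
    · obtain ⟨hm, hnn⟩ := hT1 _ htT h1
      have hl : lam ⟨_, htT⟩ = -1 := by
        rw [htwo ⟨_, htT⟩ (fun h => h1 (congrArg Subtype.val h)), hlam]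
      rw [em, ec, map_mul, map_mul, map_mul, hμ _ htT, hl, hnn, hn]
      simp
  have hex : ∀ g : G, ∃ p : M × C, (p.1 : G) * p.2 = g := by
    intro g
    have hx : g ∈ M ⊔ C := by rw [hG]; trivial
    obtain ⟨a, ha, c, hc, rfl⟩ := Subgroup.mem_sup_of_normal_left.mp hx
    exact ⟨(⟨a, ha⟩, ⟨c, hc⟩), rfl⟩
  choose p hp using hex
  let R : G → Matrix (Fin (n + 1)) (Fin (n + 1)) ℂ := fun g => μ (p g).2 • σ (eM (p g).1)
  have hR : ∀ (m : M) (c : C), R (m * c) = μ c • σ (eM m) := fun m c => hwd _ _ _ _ (hp _)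
  have hRM : ∀ m : M, R m = σ (eM m) := by
    intro m
    have := hR m 1
    simpa using this
  have hRC : ∀ c : C, R c = μ c • 1 := by
    intro c
    have := hR 1 c
    simpa using this
  have hR1 : R 1 = 1 := by simpa using hRM 1
  have hRmul : ∀ g h, R (g * h) = R g * R h := by
    intro g h
    obtain ⟨⟨m, c⟩, rfl⟩ : ∃ q : M × C, (q.1 : G) * q.2 = g := ⟨_, hp g⟩
    obtain ⟨⟨m', c'⟩, rfl⟩ : ∃ q : M × C, (q.1 : G) * q.2 = h := ⟨_, hp h⟩
    have hcc : (c : G) * m' = m' * c := by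
      have hle : C ≤ Subgroup.centralizer (M : Set G) := hC.le
      have := Subgroup.mem_centralizer_iff.mp (hle c.2)
      exact (this _ m'.2).symm
    have e : (m : G) * c * (m' * c') = ((m * m' : M) : G) * ((c * c' : C) : G) := by
      push_cast
      calc (m : G) * c * (m' * c') = m * (c * m') * c' := by group
        _ = _ := by rw [hcc]; group
    simp only
    rw [e, hR, hR, hR, map_mul, map_mul, map_mul, smul_mul_smul_comm]
  let RR : ((G ⧸ M) →* ℂ) → (G →* Matrix (Fin (n + 1)) (Fin (n + 1)) ℂ) := fun β =>
    { toFun := fun g => β (g : G ⧸ M) • R g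
      map_one' := by
        rw [hR1, QuotientGroup.mk_one, map_one, one_smul]
      map_mul' := by
        intro g h
        rw [hRmul, QuotientGroup.mk_mul, map_mul]
        exact (smul_mul_smul_comm _ _ _ _).symm }
  have hRR : ∀ β g, RR β g = β (g : G ⧸ M) • R g := fun _ _ => rfl
  have hRRM : ∀ β (m : M), RR β m = σ (eM m) := by
    intro β m
    rw [hRR, hRM, (QuotientGroup.eq_one_iff (m : G)).mpr m.2, map_one, one_smul]
  have hirrM : IsIrrChar (fun m : M => (σ (eM m)).trace) :=
    irr_of_matrix (σ.comp eM.toMonoidHom) d hd (eM.symm uu) (eM.symm vv)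
      (by simpa using hu) (by simpa using hv)
  refine ⟨fun β g => (RR β g).trace, fun β => ⟨⟨?_, ?_, ?_, t0, ?_⟩, ?_, ?_⟩⟩
  · refine irr_of_matrix (RR β) d hd (eM.symm uu : M) (eM.symm vv : M) ?_ ?_
    · rw [hRRM, MulEquiv.apply_symm_apply, hu]
    · rw [hRRM, MulEquiv.apply_symm_apply]; exact hv
  · refine prim_of_restrict G M eM C hC hG _ hirrM ?_ _ (fun m => congrArg Matrix.trace (hRRM β m))
    simp only [map_one, Matrix.trace_one, Fintype.card_fin]
    exact_mod_cast hdeg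
  · simp [Matrix.trace_one]
  · obtain ⟨hm, hnn⟩ := hT1 t0 t0.2 (fun h => ht0ne (Subtype.ext h))
    have := hRRM β ⟨t0, hm⟩
    simp only at this ⊢
    rw [this, hnn, hn, map_one, Matrix.trace_neg, Matrix.trace_one, Fintype.card_fin]
    intro h
    have h2 : ((n + 1 : ℕ) : ℂ) = 0 := by linear_combination (-1 / 2) * h
    exact absurd h2 (by exact_mod_cast Nat.succ_ne_zero n)
  · intro m; exact congrArg Matrix.trace (hRRM β m)
  · intro c
    simp only
    rw [hRR, hRC, Matrix.trace_smul, Matrix.trace_smul, Matrix.trace_one, Fintype.card_fin,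
      smul_eq_mul, smul_eq_mul]
    ring

theorem root_sum (z : ℂ) (hz : IsPrimitiveRoot z 5) : 1 + z + z ^ 2 + z ^ 3 + z ^ 4 = 0 := by
  have := hz.geom_sum_eq_zero (by norm_num)
  simpa [Finset.sum_range_succ] using this

/-- In a central product `G = M·C_G(M)` with `M ≅ SL(2,5)` and `T = M ∩ C = Z(M) ≅ C₂`,
if the nontrivial character `λ` of `T` extends to a linear character of `C`, then every
extension to `G` of a `ψ ∈ Irr(M|λ)` of degree 2 or 4 is primitive; in particular `G`
has at least `2·n₁(G/M)` primitive irreducible characters of degree 2 and at least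
`n₁(G/M)` of degree 4 not containing `T` in their kernel. -/
theorem SL25_central_product_primitive_chars (G : Type) [Group G] [Fintype G]
    (M : Subgroup G) [M.Normal]
    (eM : M ≃* Matrix.SpecialLinearGroup (Fin 2) (ZMod 5))
    (C T : Subgroup G) (hC : C = Subgroup.centralizer (M : Set G))
    (hG : M ⊔ C = ⊤) (hT : T = M ⊓ C) (hTcard : Nat.card T = 2)
    (lam : T →* ℂ) (hlamnt : lam ≠ 1)
    (hext : ∃ μ : C →* ℂ, ∀ (t : G) (ht : t ∈ T),
      μ ⟨t, (Subgroup.mem_inf.mp (hT ▸ ht)).2⟩ = lam ⟨t, ht⟩) :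
    (∀ ψ : M → ℂ, IsIrrChar ψ →
      (∀ (t : G) (ht : t ∈ T),
        ψ ⟨t, (Subgroup.mem_inf.mp (hT ▸ ht)).1⟩ = ψ 1 * lam ⟨t, ht⟩) →
      (ψ 1 = 2 ∨ ψ 1 = 4) →
      ∀ χ : G → ℂ, IsIrrChar χ → (∀ m : M, χ m = ψ m) → IsPrimitive χ) ∧
    (∀ S2 S4 : Finset (G → ℂ),
      (∀ χ, χ ∈ S2 ↔ IsIrrChar χ ∧ IsPrimitive χ ∧ χ 1 = 2 ∧
        ∃ t : T, χ (t : G) ≠ χ 1) →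
      (∀ χ, χ ∈ S4 ↔ IsIrrChar χ ∧ IsPrimitive χ ∧ χ 1 = 4 ∧
        ∃ t : T, χ (t : G) ≠ χ 1) →
      2 * Nat.card ((G ⧸ M) →* ℂ) ≤ S2.card ∧
        Nat.card ((G ⧸ M) →* ℂ) ≤ S4.card) := by
  refine ⟨?_, ?_⟩
  · intro ψ hψ _ hdeg χ _ hres
    exact prim_of_restrict G M eM C hC hG ψ hψ hdeg χ hres
  obtain ⟨μ, hμ⟩ := hext
  intro S2 S4 hS2 hS4
  have hz : IsPrimitiveRoot (Complex.exp (2 * Real.pi * Complex.I / (5 : ℕ))) 5 :=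
    Complex.isPrimitiveRoot_exp 5 (by norm_num)
  set z := Complex.exp (2 * Real.pi * Complex.I / (5 : ℕ))
  have hz2 : IsPrimitiveRoot (z ^ 2) 5 := hz.pow_of_coprime 2 (by norm_num)
  have hs1 := root_sum z hz
  have hs2 := root_sum _ hz2
  obtain ⟨χa, ha⟩ := exists_ext G M eM C T hC hG hT hTcard lam hlamnt μ hμ (n := 1)
    (weil z hs1) (weilM_nn z) _ (root_inj2 z hz) (weilM_uu z hs1) (weil_vv z hs1) (Or.inl rfl)
  obtain ⟨χb, hb⟩ := exists_ext G M eM C T hC hG hT hTcard lam hlamnt μ hμ (n := 1)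
    (weil _ hs2) (weilM_nn _) _ (root_inj2 _ hz2) (weilM_uu _ hs2) (weil_vv _ hs2) (Or.inl rfl)
  obtain ⟨χd, hd⟩ := exists_ext G M eM C T hC hG hT hTcard lam hlamnt μ hμ (n := 3)
    (cube.comp (weil z hs1))
    (by
      change cube (weilM z nn) = -1
      rw [weilM_nn, cube_neg])
    _ (root_inj4 z hz)
    (by
      change cube (weilM z uu) = _
      rw [weilM_uu z hs1, cube_diag z hs1])
    (fun j => cube_row _ (weil_vv z hs1) j) (Or.inr rfl)
  have inj : ∀ (n : ℕ) (χ : ((G ⧸ M) →* ℂ) → G → ℂ),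
      (∀ β, ∀ c : C, χ β c = β ((c : G) : G ⧸ M) * μ c * (n + 1 : ℕ)) →
      Function.Injective χ := by
    intro n χ h β β' e
    refine MonoidHom.ext fun q => ?_
    obtain ⟨g, rfl⟩ := QuotientGroup.mk_surjective q
    have hx : g ∈ M ⊔ C := by rw [hG]; trivial
    obtain ⟨a, ha, c, hc, rfl⟩ := Subgroup.mem_sup_of_normal_left.mp hx
    have e2 : ((a * c : G) : G ⧸ M) = (c : G ⧸ M) := by
      rw [QuotientGroup.mk_mul, (QuotientGroup.eq_one_iff a).mpr ha, one_mul]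
    rw [e2]
    have e3 := congrFun e c
    have e4 := h β ⟨c, hc⟩
    have e5 := h β' ⟨c, hc⟩
    simp only at e4 e5
    rw [e4, e5] at e3
    have hμ0 : μ ⟨c, hc⟩ ≠ 0 := by
      intro h0
      have h1 : μ ⟨c, hc⟩ * μ (⟨c, hc⟩⁻¹) = 1 := by rw [← map_mul, mul_inv_cancel, map_one]
      rw [h0, zero_mul] at h1
      exact zero_ne_one h1
    have hn0 : ((n + 1 : ℕ) : ℂ) ≠ 0 := by exact_mod_cast Nat.succ_ne_zero n
    exact mul_right_cancel₀ hμ0 (mul_right_cancel₀ hn0 e3)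
  have hab : ∀ β β', χa β ≠ χb β' := by
    intro β β' e
    have e1 := congrFun e ((eM.symm uu : M) : G)
    rw [(ha β).2.1, (hb β').2.1, MulEquiv.apply_symm_apply] at e1
    replace e1 : (weilM z uu).trace = (weilM (z ^ 2) uu).trace := e1
    rw [weilM_uu z hs1, weilM_uu _ hs2] at e1
    simp only [Matrix.trace_diagonal, Fin.sum_univ_two, Matrix.cons_val_zero,
      Matrix.cons_val_one] at e1
    have h5 : z ^ 5 = 1 := hz.pow_eq_one
    have h8 : (z ^ 2) ^ 4 = z ^ 3 := by linear_combination z ^ 3 * h5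
    rw [h8] at e1
    have e2 : z + z ^ 4 = -1 / 2 := by linear_combination (1 / 2) * e1 + (1 / 2) * hs1
    have e3 : (z + z ^ 4) ^ 2 = 2 + z ^ 2 + z ^ 3 := by
      linear_combination (2 + z ^ 3) * h5
    have e4 : z ^ 2 + z ^ 3 = -1 / 2 := by linear_combination hs1 - e2
    have e5 : (2 : ℂ) + z ^ 2 + z ^ 3 = 3 / 2 := by linear_combination e4
    rw [e5, e2] at e3
    norm_num at e3
  constructor
  · have hA : ∀ β, χa β ∈ S2 := fun β => (hS2 _).mpr (by
      obtain ⟨h1, h2, h3, h4⟩ := (ha β).1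
      exact ⟨h1, h2, by rw [h3]; norm_num, h4⟩)
    have hB : ∀ β, χb β ∈ S2 := fun β => (hS2 _).mpr (by
      obtain ⟨h1, h2, h3, h4⟩ := (hb β).1
      exact ⟨h1, h2, by rw [h3]; norm_num, h4⟩)
    let f : ((G ⧸ M) →* ℂ) ⊕ ((G ⧸ M) →* ℂ) → S2 :=
      Sum.elim (fun β => ⟨χa β, hA β⟩) (fun β => ⟨χb β, hB β⟩)
    have hf : Function.Injective f := by
      have ia := inj 1 χa (fun β => (ha β).2.2)
      have ib := inj 1 χb (fun β => (hb β).2.2)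
      rintro (x | x) (y | y) h
      · exact congrArg Sum.inl (ia (congrArg Subtype.val h))
      · exact absurd (congrArg Subtype.val h) (hab x y)
      · exact absurd (congrArg Subtype.val h).symm (hab y x)
      · exact congrArg Sum.inr (ib (congrArg Subtype.val h))
    have hfin : Finite (((G ⧸ M) →* ℂ) ⊕ ((G ⧸ M) →* ℂ)) := Finite.of_injective f hf
    have hfin' : Finite ((G ⧸ M) →* ℂ) :=
      Finite.of_injective (Sum.inl : _ → ((G ⧸ M) →* ℂ) ⊕ ((G ⧸ M) →* ℂ)) Sum.inl_injective
    have := Nat.card_le_card_of_injective f hf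
    rw [Nat.card_sum, Nat.card_eq_fintype_card (α := S2), Fintype.card_coe] at this
    omega
  · have hD : ∀ β, χd β ∈ S4 := fun β => (hS4 _).mpr (by
      obtain ⟨h1, h2, h3, h4⟩ := (hd β).1
      exact ⟨h1, h2, by rw [h3]; norm_num, h4⟩)
    have id' := inj 3 χd (fun β => (hd β).2.2)
    have := Nat.card_le_card_of_injective (fun β => (⟨χd β, hD β⟩ : S4))
      (fun x y h => id' (congrArg Subtype.val h))
    rwa [Nat.card_eq_fintype_card (α := S4), Fintype.card_coe] at this
end
end
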